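/- arXiv:2407.05880 — 7 statements merged into one kernel-verified Lean document; each statement's English description precedes it below -/
import Mathlib

section
/- Let X be a compact Hausdorff space, n ≥ 1, and let p, q : X → Mₙ(ℝ) be continuous maps such that p(x) and q(x) are projections for every x. Suppose a : X → Mₙ(ℝ) is continuous and satisfies q(x)·a(x)·p(x) = a(x) for all x, and for each x the linear map v ↦ a(x)·v restricts to a bijection from the range of p(x) onto the range of q(x). Then there exists a continuous s : X → Mₙ(ℝ) which is a partial isometry implementing an equivalence of p and q: s(x)ᵀ·s(x) = p(x) and s(x)·s(x)ᵀ = q(x) for all x ∈ X. -/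
open Matrix

section helpers

open scoped Matrix.Norms.L2Operator Topology

/-- The gauge `aᵀa + (1 - p)` is positive definite. -/
theorem aux_posDef {n : ℕ} (p a : Matrix (Fin n) (Fin n) ℝ)
    (hp : p * p = p) (hpt : pᵀ = p)
    (hinj : Set.InjOn a.mulVec (Set.range p.mulVec)) :
    (aᵀ * a + (1 - p)).PosDef := by
  have e : (1 - p) = (1 - p)ᴴ * (1 - p) := by
    simp [hpt, sub_mul, mul_sub, hp]
  have h1 : (aᵀ * a).PosSemidef := by
    simpa using Matrix.posSemidef_conjTranspose_mul_self a
  have h2 : (1 - p).PosSemidef := by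
    rw [e]; exact Matrix.posSemidef_conjTranspose_mul_self _
  have h12 := h1.add h2
  refine Matrix.PosDef.of_dotProduct_mulVec_pos h12.1 fun x hx => ?_
  refine lt_of_le_of_ne (h12.dotProduct_mulVec_nonneg x) fun h => hx ?_
  rw [add_mulVec, dotProduct_add] at h
  have n1 := h1.dotProduct_mulVec_nonneg x
  have n2 := h2.dotProduct_mulVec_nonneg x
  have z1 := (h1.dotProduct_mulVec_zero_iff x).1 (by linarith)
  have z2 := (h2.dotProduct_mulVec_zero_iff x).1 (by linarith)
  have z3 : a *ᵥ x = 0 := by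
    have : aᴴ * a = aᵀ * a := by simp
    rw [← this] at z1
    exact (Matrix.conjTranspose_mul_self_mulVec_eq_zero a x).1 z1
  rw [sub_mulVec, one_mulVec, sub_eq_zero] at z2
  exact hinj ⟨x, z2.symm⟩ ⟨0, by simp⟩ (by simpa using z3)

theorem aux_pos_spec {n : ℕ} {b : Matrix (Fin n) (Fin n) ℝ} (hb : b.PosDef) :
    spectrum ℝ b ⊆ Set.Ioi 0 := by
  rw [hb.1.spectrum_real_eq_range_eigenvalues]
  rintro _ ⟨i, rfl⟩
  exact hb.eigenvalues_pos i

/-- inverse square root -/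
theorem aux_cont {X : Type*} [TopologicalSpace X] {n : ℕ}
    (b : X → Matrix (Fin n) (Fin n) ℝ) (hc : Continuous b) (hb : ∀ x, (b x).PosDef) :
    Continuous fun x => cfc (fun t : ℝ => (√t)⁻¹) (b x) := by
  refine Continuous.cfc_of_mem_nhdsSet (s := Set.Ioi (0:ℝ)) (p := IsSelfAdjoint) _ ?_ hc
    (fun x => (hb x).1) ?_
  · exact isOpen_Ioi.mem_nhdsSet.2 (Set.iUnion_subset fun x => aux_pos_spec (hb x))
  · exact Real.continuous_sqrt.continuousOn.inv₀ fun t ht => (Real.sqrt_pos.2 ht).ne'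

theorem aux_sq {n : ℕ} {b : Matrix (Fin n) (Fin n) ℝ} (hb : b.PosDef) :
    cfc (fun t : ℝ => (√t)⁻¹) b * cfc (fun t : ℝ => (√t)⁻¹) b * b = 1 := by
  have hsa : IsSelfAdjoint b := hb.1
  have hcont : ContinuousOn (fun t : ℝ => (√t)⁻¹) (spectrum ℝ b) :=
    Real.continuous_sqrt.continuousOn.inv₀ fun t ht => (Real.sqrt_pos.2 (aux_pos_spec hb ht)).ne'
  conv_lhs => rw [← cfc_mul _ _ b hcont hcont]
  conv_lhs => 
    arg 2
    rw [← cfc_id ℝ b hsa]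
  rw [← cfc_mul (fun t : ℝ => (√t)⁻¹ * (√t)⁻¹) id b (hcont.mul hcont) continuousOn_id, ← cfc_one ℝ b hsa]
  refine cfc_congr fun t ht => ?_
  have ht : 0 < t := aux_pos_spec hb ht
  have := Real.mul_self_sqrt ht.le
  have h3 := (Real.sqrt_pos.2 ht).ne'
  simp only [id, Pi.one_apply]
  rw [← mul_inv, this, inv_mul_cancel₀ ht.ne']

end helpers

/-- over a compact Hausdorff base, a continuous intertwiner `a` with
`q·a·p = a` that is fiberwise a bijection from the range of `p(x)` onto the range of
`q(x)` yields a continuous partial isometry `s` with `sᵀs = p` and `ssᵀ = q`. -/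
theorem exists_continuous_partial_isometry
    {X : Type*} [TopologicalSpace X] [CompactSpace X] [T2Space X] {n : ℕ} (hn : 1 ≤ n)
    (p q a : C(X, Matrix (Fin n) (Fin n) ℝ))
    (hp : ∀ x, p x * p x = p x ∧ (p x)ᵀ = p x)
    (hq : ∀ x, q x * q x = q x ∧ (q x)ᵀ = q x)
    (ha : ∀ x, q x * a x * p x = a x)
    (hbij : ∀ x, Set.BijOn (a x).mulVec
      (Set.range (p x).mulVec) (Set.range (q x).mulVec)) :
    ∃ s : C(X, Matrix (Fin n) (Fin n) ℝ),
      ∀ x, (s x)ᵀ * s x = p x ∧ s x * (s x)ᵀ = q x := by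
  have hb : ∀ x, ((a x)ᵀ * a x + (1 - p x)).PosDef := fun x =>
    aux_posDef _ _ (hp x).1 (hp x).2 (hbij x).injOn
  have hbc : Continuous fun x => (a x)ᵀ * a x + (1 - p x) :=
    (a.continuous.matrix_transpose.matrix_mul a.continuous).add
      (continuous_const.sub p.continuous)
  have hrc := aux_cont _ hbc hb
  refine ⟨⟨fun x => a x * cfc (fun t : ℝ => (√t)⁻¹) ((a x)ᵀ * a x + (1 - p x)),
    a.continuous.matrix_mul hrc⟩, fun x => ?_⟩
  obtain ⟨hp1, hp2⟩ := hp x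
  obtain ⟨hq1, hq2⟩ := hq x
  have hax := ha x
  have hbx := hbij x
  have hsq := aux_sq (hb x)
  have hcomm0 : ∀ y, Commute ((a x)ᵀ * a x + (1 - p x)) y →
      Commute (cfc (fun t : ℝ => (√t)⁻¹) ((a x)ᵀ * a x + (1 - p x))) y :=
    fun y hy => hy.cfc_real _
  have hrt : (cfc (fun t : ℝ => (√t)⁻¹) ((a x)ᵀ * a x + (1 - p x)))ᵀ =
      cfc (fun t : ℝ => (√t)⁻¹) ((a x)ᵀ * a x + (1 - p x)) := by
    have : IsSelfAdjoint (cfc (fun t : ℝ => (√t)⁻¹) ((a x)ᵀ * a x + (1 - p x))) :=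
      cfc_predicate _ _
    simpa [IsSelfAdjoint, star_eq_conjTranspose] using this
  simp only [ContinuousMap.coe_mk]
  generalize cfc (fun t : ℝ => (√t)⁻¹) ((a x)ᵀ * a x + (1 - p x)) = r at *
  generalize a x = A at *
  generalize p x = P at *
  generalize q x = Q at *
  have hAP : A * P = A := by rw [← hax, mul_assoc, hp1]
  have hQA : Q * A = A := by rw [← hax, ← mul_assoc, ← mul_assoc, hq1]
  have hPA : P * Aᵀ = Aᵀ := by
    have := congrArg transpose hAP
    rwa [transpose_mul, hp2] at this
  have hAQ : Aᵀ * Q = Aᵀ := by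
    have := congrArg transpose hQA
    rwa [transpose_mul, hq2] at this
  have hbP : (Aᵀ * A + (1 - P)) * P = Aᵀ * A := by
    rw [add_mul, mul_assoc, hAP, sub_mul, hp1]; simp
  have hPb : P * (Aᵀ * A + (1 - P)) = Aᵀ * A := by
    rw [mul_add, ← mul_assoc, hPA, mul_sub, hp1]; simp
  have hrP : r * P = P * r := hcomm0 P (hbP.trans hPb.symm)
  have hrb := hcomm0 _ (Commute.refl _)
  have hrAA : r * r * (Aᵀ * A) = P := by rw [← hbP, ← mul_assoc, hsq, one_mul]
  have hrA : r * (Aᵀ * A) = (Aᵀ * A) * r := by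
    conv_lhs => rw [← hbP, ← mul_assoc, hrb.eq, mul_assoc, hrP, ← mul_assoc, hbP]
  constructor
  · rw [transpose_mul, hrt]
    calc r * Aᵀ * (A * r) = r * ((Aᵀ * A) * r) := by simp only [mul_assoc]
      _ = P := by rw [← hrA, ← mul_assoc, hrAA]
  · rw [transpose_mul, hrt]
    have hE : A * r * (r * Aᵀ) * A = A := by
      calc _ = A * (r * r * (Aᵀ * A)) := by simp only [mul_assoc]
        _ = A := by rw [hrAA, hAP]
    have hEQ : A * r * (r * Aᵀ) * Q = A * r * (r * Aᵀ) := by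
      simp only [mul_assoc, hAQ]
    rw [← hEQ]
    apply Matrix.mulVec_injective
    funext v
    obtain ⟨w, -, hw⟩ := hbx.surjOn ⟨v, rfl⟩
    rw [← mulVec_mulVec]
    change _ *ᵥ (Q.mulVec v) = Q.mulVec v
    rw [← hw, mulVec_mulVec, hE]
end

section
/- Let X be a topological space, n ≥ 1, and let p : X → Mₙ(ℝ) be a continuous map with p(x)² = p(x) and p(x)ᵀ = p(x) for all x. Then E_p = {(x, v) ∈ X × ℝⁿ : p(x)·v = v} is a locally trivial real vector bundle over X: for every x₀ ∈ X there exist an open neighborhood U of x₀, an integer k (the rank of p(x₀)), and a homeomorphism h from {(x,v) ∈ E_p : x ∈ U} onto U × ℝᵏ which commutes with the projections to U and is ℝ-linear and bijective on each fiber. -/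
open Matrix

/-- A projection matrix factors through `ℝᵏ`, where `k` is its rank. -/
lemma exists_factor_of_idempotent {n : ℕ} (P : Matrix (Fin n) (Fin n) ℝ) (hP : P * P = P) :
    ∃ (A : (Fin n → ℝ) →ₗ[ℝ] (Fin P.rank → ℝ)) (B : (Fin P.rank → ℝ) →ₗ[ℝ] (Fin n → ℝ)),
      (∀ w, A (B w) = w) ∧ (∀ v, B (A v) = P.mulVec v) := by
  let e : LinearMap.range P.mulVecLin ≃ₗ[ℝ] (Fin P.rank → ℝ) :=
    LinearEquiv.ofFinrankEq _ _ (by rw [Module.finrank_fin_fun]; rfl)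
  refine ⟨e.toLinearMap ∘ₗ P.mulVecLin.rangeRestrict,
    (LinearMap.range P.mulVecLin).subtype ∘ₗ e.symm.toLinearMap, ?_, ?_⟩
  · intro w
    have : P.mulVecLin.rangeRestrict (e.symm w : Fin n → ℝ) = e.symm w := by
      obtain ⟨u, hu⟩ := (e.symm w).2
      apply Subtype.ext
      rw [LinearMap.codRestrict_apply, ← hu]
      simp [Matrix.mulVec_mulVec, hP]
    simp [this]
  · intro v
    simp

/-- for a continuous projection-valued map `p : X → Mₙ(ℝ)`, the space
`E_p = {(x,v) : p(x)v = v}` is a locally trivial real vector bundle over `X`: around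
any point `x₀` there is an open set `U` and a fiberwise-linear homeomorphism of the
part of `E_p` over `U` with `U × ℝᵏ`, where `k` is the rank of `p(x₀)`. -/
theorem range_of_projection_is_locally_trivial
    {X : Type*} [TopologicalSpace X] {n : ℕ} (hn : 1 ≤ n)
    (p : C(X, Matrix (Fin n) (Fin n) ℝ))
    (hp : ∀ x, p x * p x = p x ∧ (p x)ᵀ = p x) (x₀ : X) :
    ∃ U : Set X, IsOpen U ∧ x₀ ∈ U ∧
      ∃ (k : ℕ)
        (h : {z : X × (Fin n → ℝ) // (p z.1).mulVec z.2 = z.2 ∧ z.1 ∈ U} ≃ₜ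
              U × (Fin k → ℝ)),
        k = (p x₀).rank ∧
        (∀ z, ((h z).1 : X) = (z : X × (Fin n → ℝ)).1) ∧
        (∀ z w v : {z : X × (Fin n → ℝ) // (p z.1).mulVec z.2 = z.2 ∧ z.1 ∈ U},
          (z : X × (Fin n → ℝ)).1 = (w : X × (Fin n → ℝ)).1 →
          (v : X × (Fin n → ℝ)) =
            ((z : X × (Fin n → ℝ)).1,
              (z : X × (Fin n → ℝ)).2 + (w : X × (Fin n → ℝ)).2) →
          (h v).2 = (h z).2 + (h w).2) ∧
        (∀ (z w : {z : X × (Fin n → ℝ) // (p z.1).mulVec z.2 = z.2 ∧ z.1 ∈ U}) (r : ℝ),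
          (w : X × (Fin n → ℝ)) =
            ((z : X × (Fin n → ℝ)).1, r • (z : X × (Fin n → ℝ)).2) →
          (h w).2 = r • (h z).2) := by
  obtain ⟨A, B, hAB, hBA⟩ := exists_factor_of_idempotent (p x₀) (hp x₀).1
  have hA : Continuous A := A.continuous_of_finiteDimensional
  have hB : Continuous B := B.continuous_of_finiteDimensional
  obtain ⟨g, hg⟩ : ∃ g : X → Matrix (Fin n) (Fin n) ℝ,
    g = fun x => p x₀ * p x + (1 - p x₀) * (1 - p x) := ⟨_, rfl⟩
  have hgc : Continuous g := by
    rw [hg]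
    have := p.continuous
    fun_prop
  have hgp : ∀ x, g x * p x = p x₀ * g x := by
    intro x
    have h1 := (hp x).1
    have h0 := (hp x₀).1
    have e1 : g x * p x = p x₀ * p x := by
      simp only [hg, add_mul, mul_assoc, sub_mul, one_mul, h1, sub_self, mul_zero, add_zero]
    have e2 : p x₀ * g x = p x₀ * p x := by
      simp only [hg, mul_add, ← mul_assoc, mul_sub, mul_one, h0, sub_self, zero_mul, add_zero]
    rw [e1, e2]
  have hg0 : g x₀ = 1 := by
    simp only [hg, mul_sub, sub_mul, mul_one, one_mul, (hp x₀).1]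
    abel
  let U : Set X := {x | (g x).det ≠ 0}
  have hU : IsOpen U := isOpen_ne_fun hgc.matrix_det continuous_const
  let gi : X → Matrix (Fin n) (Fin n) ℝ := fun x => ((g x).det)⁻¹ • (g x).adjugate
  have hl : ∀ x ∈ U, gi x * g x = 1 := by
    intro x hx
    have hx' : (g x).det ≠ 0 := hx
    simp [gi, Matrix.adjugate_mul, smul_smul, hx']
  have hr : ∀ x ∈ U, g x * gi x = 1 := by
    intro x hx
    have hx' : (g x).det ≠ 0 := hx
    simp [gi, Matrix.mul_adjugate, smul_smul, hx']
  have hpgi : ∀ x ∈ U, p x * gi x = gi x * p x₀ := by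
    intro x hx
    calc p x * gi x = gi x * g x * (p x * gi x) := by rw [hl x hx, one_mul]
      _ = gi x * (g x * p x) * gi x := by simp only [mul_assoc]
      _ = gi x * p x₀ * (g x * gi x) := by rw [hgp]; simp only [mul_assoc]
      _ = gi x * p x₀ := by rw [hr x hx, mul_one]
  have hgic : Continuous fun x : U => gi x := by
    have hc : Continuous fun x : U => g x := hgc.comp continuous_subtype_val
    exact (hc.matrix_det.inv₀ fun x => x.2).smul hc.matrix_adjugate
  have hPB : ∀ w, (p x₀).mulVec (B w) = B w := by
    intro w
    rw [← hBA, hAB]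
  refine ⟨U, hU, by simp [U, hg0], (p x₀).rank,
    { toFun := fun z => (⟨z.1.1, z.2.2⟩, A ((g z.1.1).mulVec z.1.2))
      invFun := fun y => ⟨(y.1, (gi y.1).mulVec (B y.2)), by
        refine ⟨?_, y.1.2⟩
        simp only [Matrix.mulVec_mulVec]
        rw [hpgi _ y.1.2, ← Matrix.mulVec_mulVec, hPB]⟩
      left_inv := ?_
      right_inv := ?_
      continuous_toFun := ?_
      continuous_invFun := ?_ }, rfl, fun _ => rfl, ?_, ?_⟩
  · rintro ⟨⟨x, v⟩, hv, hx⟩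
    apply Subtype.ext
    refine Prod.ext rfl ?_
    change (gi x).mulVec (B (A ((g x).mulVec v))) = v
    rw [hBA, Matrix.mulVec_mulVec, Matrix.mulVec_mulVec, mul_assoc, ← hgp, ← mul_assoc,
      hl x hx, one_mul]
    exact hv
  · rintro ⟨⟨x, hx⟩, w⟩
    refine Prod.ext rfl ?_
    change A ((g x).mulVec ((gi x).mulVec (B w))) = w
    rw [Matrix.mulVec_mulVec, hr x hx, Matrix.one_mulVec, hAB]
  · refine Continuous.prodMk (by fun_prop) (hA.comp ?_)
    exact Continuous.matrix_mulVec (hgc.comp (by fun_prop)) (by fun_prop)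
  · refine Continuous.subtype_mk (Continuous.prodMk (by fun_prop) ?_) _
    exact Continuous.matrix_mulVec (hgic.comp continuous_fst) (hB.comp continuous_snd)
  · rintro ⟨⟨x, a⟩, _⟩ ⟨⟨y, b⟩, _⟩ ⟨⟨z, c⟩, _⟩ hxy hv
    obtain rfl : x = y := hxy
    obtain ⟨rfl, rfl⟩ := Prod.mk.inj hv
    change A ((g _).mulVec (_ + _)) = A ((g _).mulVec _) + A ((g _).mulVec _)
    rw [Matrix.mulVec_add, map_add]
  · rintro ⟨⟨x, a⟩, _⟩ ⟨⟨y, b⟩, _⟩ r hv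
    obtain ⟨rfl, rfl⟩ := Prod.mk.inj hv
    change A ((g _).mulVec (r • _)) = r • A ((g _).mulVec _)
    rw [Matrix.mulVec_smul, map_smul]
end

section
/- Let X be a compact Hausdorff space and let E be a locally trivial topological real vector bundle over X with fibers of finite dimension. Then there exist an integer N ≥ 1, a continuous map p : X → M_N(ℝ) with p(x)² = p(x) and p(x)ᵀ = p(x) for all x, and a homeomorphism from the total space of E onto E_p = {(x, v) ∈ X × ℝᴺ : p(x)·v = v} which commutes with the projections to X and is ℝ-linear and bijective on each fiber. (In particular, E embeds as a fiberwise-injective bundle map into a trivial bundle X × ℝᴺ, and E is a direct summand of a trivial bundle.) -/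
open Matrix Bundle

/-- The left inverse `(AᵀA)⁻¹Aᵀ`. -/
noncomputable def swanG {N n : ℕ} (A : Matrix (Fin N) (Fin n) ℝ) : Matrix (Fin n) (Fin N) ℝ :=
  (Aᵀ * A)⁻¹ * Aᵀ

lemma swan_det {N n : ℕ} (A : Matrix (Fin N) (Fin n) ℝ) (hA : Function.Injective A.mulVec) :
    (Aᵀ * A).det ≠ 0 := by
  intro h
  obtain ⟨v, hv, h0⟩ := Matrix.exists_mulVec_eq_zero_iff.2 h
  apply hv
  apply hA
  rw [Matrix.mulVec_zero]
  rw [← Matrix.mulVec_mulVec] at h0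
  have h1 : A *ᵥ v ⬝ᵥ A *ᵥ v = 0 := by
    have := congrArg (fun w => v ⬝ᵥ w) h0
    simp only [dotProduct_zero] at this
    rwa [Matrix.dotProduct_mulVec, Matrix.vecMul_transpose] at this
  exact dotProduct_self_eq_zero.1 h1

lemma swanG_mul {N n : ℕ} (A : Matrix (Fin N) (Fin n) ℝ) (hA : Function.Injective A.mulVec) :
    swanG A * A = 1 := by
  rw [swanG, Matrix.mul_assoc]
  exact Matrix.nonsing_inv_mul _ (swan_det A hA).isUnit

lemma swanG_symm {N n : ℕ} (A : Matrix (Fin N) (Fin n) ℝ) :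
    (A * swanG A)ᵀ = A * swanG A := by
  simp [swanG, Matrix.transpose_mul, Matrix.transpose_nonsing_inv, Matrix.mul_assoc]

lemma swanG_cont {N n : ℕ} (A : Matrix (Fin N) (Fin n) ℝ) (hA : Function.Injective A.mulVec) :
    ContinuousAt (swanG (N := N) (n := n)) A := by
  have h1 : ContinuousAt (Inv.inv : Matrix (Fin n) (Fin n) ℝ → _) (Aᵀ * A) := by
    apply continuousAt_matrix_inv
    have : (Ring.inverse : ℝ → ℝ) = Inv.inv := by ext; simp
    rw [this]
    exact continuousAt_inv₀ (swan_det A hA)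
  have h2 : ContinuousAt (fun M : Matrix (Fin N) (Fin n) ℝ => (Mᵀ * M)⁻¹) A :=
    ContinuousAt.comp (f := fun M : Matrix (Fin N) (Fin n) ℝ => Mᵀ * M) h1
      (by fun_prop)
  have hm : Continuous (fun q : Matrix (Fin n) (Fin n) ℝ × Matrix (Fin n) (Fin N) ℝ =>
    q.1 * q.2) := by fun_prop
  have h3 : ContinuousAt (fun M : Matrix (Fin N) (Fin n) ℝ => Mᵀ) A := by fun_prop
  exact ContinuousAt.comp (f := fun M : Matrix (Fin N) (Fin n) ℝ => ((Mᵀ * M)⁻¹, Mᵀ))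
    hm.continuousAt (h2.prodMk h3)

/-- Uniqueness of the orthogonal projection. -/
lemma swan_unique {N : ℕ} (p q : Matrix (Fin N) (Fin N) ℝ) (hp : p * p = p) (hp' : pᵀ = p)
    (hq : q * q = q) (hq' : qᵀ = q) (h : ∀ v, p *ᵥ v = v ↔ q *ᵥ v = v) : p = q := by
  have key : ∀ p q : Matrix (Fin N) (Fin N) ℝ, q * q = q →
      (∀ v, p *ᵥ v = v ↔ q *ᵥ v = v) → p * q = q := by
    intro p q hq h
    apply Matrix.mulVec_injective
    ext1 v
    rw [← Matrix.mulVec_mulVec, h, Matrix.mulVec_mulVec, hq]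
  have h1 := key p q hq h
  have h2 := key q p hp (fun v => (h v).symm)
  rw [← h1, ← hp', ← hq', ← Matrix.transpose_mul, h2]

section
variable {X : Type*} [TopologicalSpace X]
    {F : Type*} [NormedAddCommGroup F] [NormedSpace ℝ F] [FiniteDimensional ℝ F]
    {E : X → Type*} [TopologicalSpace (TotalSpace F E)]
    [∀ x, TopologicalSpace (E x)] [∀ x, AddCommGroup (E x)] [∀ x, Module ℝ (E x)]
    [FiberBundle F E] [VectorBundle ℝ F E]

lemma swan_local {N : ℕ} (Φ : ∀ x, E x →ₗ[ℝ] (Fin N → ℝ))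
    (hΦ : Continuous (fun z : TotalSpace F E => Φ z.proj z.2))
    (hinj : ∀ x, Function.Injective (Φ x)) (x₀ : X) :
    ∃ U : Set X, IsOpen U ∧ x₀ ∈ U ∧ ∃ (P : X → Matrix (Fin N) (Fin N) ℝ)
      (s : X × (Fin N → ℝ) → TotalSpace F E),
      ContinuousOn P U ∧ ContinuousOn s (U ×ˢ Set.univ) ∧
      (∀ x ∈ U, P x * P x = P x ∧ (P x)ᵀ = P x ∧ ∀ v, P x *ᵥ v = v ↔ ∃ w, Φ x w = v) ∧
      ∀ x ∈ U, ∀ w : E x, s (x, Φ x w) = ⟨x, w⟩ := by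
  set e := trivializationAt F E x₀ with he
  let b := Module.finBasis ℝ F
  let A : X → Matrix (Fin N) (Fin (Module.finrank ℝ F)) ℝ :=
    fun x => Matrix.of fun i k => Φ x (e.symm x (b k)) i
  have hAv : ∀ x ∈ e.baseSet, ∀ c, A x *ᵥ c = Φ x (e.symm x (b.equivFun.symm c)) := by
    intro x hx c
    rw [← e.symmₗ_apply (R := ℝ) hx, Module.Basis.equivFun_symm_apply]
    simp only [map_sum, map_smul]
    ext i
    simp [A, Matrix.mulVec, dotProduct, e.symmₗ_apply (R := ℝ) hx, mul_comm]
  have hrep : ∀ x ∈ e.baseSet, ∀ w : E x, A x *ᵥ (b.equivFun (e ⟨x, w⟩).2) = Φ x w := by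
    intro x hx w
    rw [hAv x hx, LinearEquiv.symm_apply_apply, e.symm_apply_apply_mk hx]
  have hAinj : ∀ x ∈ e.baseSet, Function.Injective (A x).mulVec := by
    intro x hx c d hcd
    rw [hAv x hx, hAv x hx] at hcd
    have h1 := hinj x hcd
    rw [← e.linearEquivAt_symm_apply (R := ℝ) x hx, ← e.linearEquivAt_symm_apply (R := ℝ) x hx] at h1
    exact b.equivFun.symm.injective ((e.linearEquivAt ℝ x hx).symm.injective h1)
  have hAc : ContinuousOn A e.baseSet := by
    have h1 : ∀ k, ContinuousOn (fun x => Φ x (e.symm x (b k))) e.baseSet := by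
      intro k
      have h2 : ContinuousOn (fun x => TotalSpace.mk' F x (e.symm x (b k))) e.baseSet :=
        e.continuousOn_symm.comp (f := fun x => (x, b k)) (by fun_prop)
          (fun x hx => ⟨hx, trivial⟩)
      exact hΦ.comp_continuousOn h2
    refine continuousOn_pi.2 fun i => continuousOn_pi.2 fun k => ?_
    exact (continuous_apply i).comp_continuousOn (h1 k)
  have hGc : ContinuousOn (fun x => swanG (A x)) e.baseSet := fun x hx =>
    (swanG_cont _ (hAinj x hx)).comp_continuousWithinAt (hAc x hx)
  refine ⟨e.baseSet, e.open_baseSet, FiberBundle.mem_baseSet_trivializationAt' x₀,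
    fun x => A x * swanG (A x),
    fun q => TotalSpace.mk' F q.1 (e.symm q.1 (b.equivFun.symm (swanG (A q.1) *ᵥ q.2))), ?_, ?_, ?_, ?_⟩
  · have hm : Continuous (fun q : Matrix (Fin N) (Fin (Module.finrank ℝ F)) ℝ ×
      Matrix (Fin (Module.finrank ℝ F)) (Fin N) ℝ => q.1 * q.2) := by fun_prop
    exact hm.comp_continuousOn (hAc.prodMk hGc)
  · have hm : Continuous (fun q : Matrix (Fin (Module.finrank ℝ F)) (Fin N) ℝ × (Fin N → ℝ) =>
      q.1 *ᵥ q.2) := by fun_prop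
    have h1 : ContinuousOn (fun q : X × (Fin N → ℝ) => swanG (A q.1) *ᵥ q.2)
        (e.baseSet ×ˢ Set.univ) :=
      hm.comp_continuousOn ((hGc.comp continuousOn_fst (fun q hq => hq.1)).prodMk continuousOn_snd)
    have h2 : Continuous (b.equivFun.symm) := 
      LinearMap.continuous_of_finiteDimensional b.equivFun.symm.toLinearMap
    exact e.continuousOn_symm.comp (continuousOn_fst.prodMk (h2.comp_continuousOn h1))
      (fun q hq => ⟨hq.1, trivial⟩)
  · intro x hx
    have hG := swanG_mul _ (hAinj x hx)
    refine ⟨?_, swanG_symm _, fun v => ⟨fun hv => ?_, ?_⟩⟩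
    · rw [Matrix.mul_assoc, ← Matrix.mul_assoc (swanG (A x)), hG, Matrix.one_mul]
    · rw [← Matrix.mulVec_mulVec, hAv x hx] at hv
      exact ⟨_, hv⟩
    · rintro ⟨w, rfl⟩
      rw [← hrep x hx, Matrix.mulVec_mulVec, Matrix.mul_assoc, hG, Matrix.mul_one]
  · intro x hx w
    have hG := swanG_mul _ (hAinj x hx)
    simp only
    rw [← hrep x hx, Matrix.mulVec_mulVec, hG, Matrix.one_mulVec, LinearEquiv.symm_apply_apply,
      e.symm_apply_apply_mk hx]

lemma swan_embed [CompactSpace X] [T2Space X] :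
    ∃ N : ℕ, 1 ≤ N ∧ ∃ Φ : ∀ x, E x →ₗ[ℝ] (Fin N → ℝ),
      Continuous (fun z : TotalSpace F E => Φ z.proj z.2) ∧ ∀ x, Function.Injective (Φ x) := by
  classical
  obtain ⟨t, ht⟩ := isCompact_univ.elim_finite_subcover
    (fun x : X => (trivializationAt F E x).baseSet) (fun x => (trivializationAt F E x).open_baseSet)
    (fun x _ => Set.mem_iUnion.2 ⟨x, FiberBundle.mem_baseSet_trivializationAt' x⟩)
  obtain ⟨ρ, hρ⟩ := PartitionOfUnity.exists_isSubordinate (s := Set.univ) isClosed_univ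
    (fun i : t => (trivializationAt F E (i : X)).baseSet)
    (fun i => (trivializationAt F E (i : X)).open_baseSet)
    (by
      intro x hx
      obtain ⟨i, hi, hxi⟩ := Set.mem_iUnion₂.1 (ht hx)
      exact Set.mem_iUnion.2 ⟨⟨i, hi⟩, hxi⟩)
  let b := Module.finBasis ℝ F
  let κ := Option (t × Fin (Module.finrank ℝ F))
  let L : ∀ x, κ → (E x →ₗ[ℝ] ℝ) := fun x k => k.elim 0
    (fun q => ρ q.1 x • (b.coord q.2 ∘ₗ (trivializationAt F E (q.1 : X)).linearMapAt ℝ x))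
  have hLc : ∀ k, Continuous (fun z : TotalSpace F E => L z.proj k z.2) := by
    rintro (_ | ⟨i, j⟩)
    · exact continuous_const
    show Continuous (fun z : TotalSpace F E => ρ i z.proj * b.coord j 
      ((trivializationAt F E (i : X)).linearMapAt ℝ z.proj z.2))
    set e := trivializationAt F E (i : X) with he
    have hpr : Continuous (fun z : TotalSpace F E => z.proj) := FiberBundle.continuous_proj F E
    have hb : Continuous (b.coord j) := LinearMap.continuous_of_finiteDimensional _
    rw [continuous_iff_continuousAt]
    intro z
    by_cases hz : z.proj ∈ e.baseSet
    · have h1 : ContinuousAt (fun z => (e z).2) z :=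
        continuousAt_snd.comp (e.continuousAt (e.mem_source.2 hz))
      have h2 : ContinuousAt (fun z : TotalSpace F E => ρ i z.proj * b.coord j (e z).2) z :=
        (((ρ i).continuous.comp hpr).continuousAt).mul (hb.continuousAt.comp h1)
      refine h2.congr ?_
      filter_upwards [(e.open_baseSet.preimage hpr).mem_nhds hz] with y hy
      rw [e.coe_linearMapAt_of_mem hy]
    · have hz' : z.proj ∈ (tsupport (ρ i))ᶜ := fun h => hz (hρ i h)
      refine (continuousAt_const (y := (0 : ℝ))).congr ?_
      filter_upwards [((isClosed_tsupport (ρ i)).isOpen_compl.preimage hpr).mem_nhds hz'] with y hy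
      rw [image_eq_zero_of_notMem_tsupport hy, zero_mul]
  have hLi : ∀ x (v : E x), (∀ k, L x k v = 0) → v = 0 := by
    intro x v h
    obtain ⟨i, hi⟩ := ρ.exists_pos (Set.mem_univ x)
    have hx : x ∈ (trivializationAt F E (i : X)).baseSet :=
      hρ i (subset_tsupport _ (Function.mem_support.2 hi.ne'))
    have h1 : (trivializationAt F E (i : X)).linearEquivAt ℝ x hx v = 0 := by
      apply b.ext_elem
      intro j
      have h2 := h (some (i, j))
      change ρ i x * b.coord j ((trivializationAt F E (i : X)).linearMapAt ℝ x v) = 0 at h2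
      rw [Trivialization.coe_linearMapAt_of_mem _ hx] at h2
      simpa using (mul_eq_zero.1 h2).resolve_left hi.ne'
    exact (LinearEquiv.map_eq_zero_iff _).1 h1
  refine ⟨Fintype.card κ, Fintype.card_pos, fun x => LinearMap.pi fun m => L x ((Fintype.equivFin κ).symm m),
    continuous_pi fun m => hLc _, fun x => ?_⟩
  rw [injective_iff_map_eq_zero]
  intro v hv
  apply hLi x v
  intro k
  have := congrFun hv (Fintype.equivFin κ k)
  simpa using this
end


/-- surjectivity part of Swan's theorem: a locally trivial real vector
bundle with finite-dimensional fibers over a compact Hausdorff base is fiberwise-linearly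
homeomorphic to a bundle of the form `E_p = {(x,v) ∈ X × ℝᴺ : p(x)v = v}` for a
continuous projection-valued map `p : X → M_N(ℝ)`. -/
theorem vector_bundle_iso_range_of_projection
    {X : Type*} [TopologicalSpace X] [CompactSpace X] [T2Space X]
    (F : Type*) [NormedAddCommGroup F] [NormedSpace ℝ F] [FiniteDimensional ℝ F]
    (E : X → Type*) [TopologicalSpace (TotalSpace F E)]
    [∀ x, TopologicalSpace (E x)] [∀ x, AddCommGroup (E x)] [∀ x, Module ℝ (E x)]
    [FiberBundle F E] [VectorBundle ℝ F E] :
    ∃ N : ℕ, 1 ≤ N ∧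
      ∃ p : C(X, Matrix (Fin N) (Fin N) ℝ),
        (∀ x, p x * p x = p x ∧ (p x)ᵀ = p x) ∧
        ∃ h : TotalSpace F E ≃ₜ {z : X × (Fin N → ℝ) // (p z.1).mulVec z.2 = z.2},
          (∀ z : TotalSpace F E, (h z : X × (Fin N → ℝ)).1 = z.proj) ∧
          (∀ (x : X) (v w : E x),
            (h (TotalSpace.mk x (v + w)) : X × (Fin N → ℝ)).2 =
              (h (TotalSpace.mk x v) : X × (Fin N → ℝ)).2 +
                (h (TotalSpace.mk x w) : X × (Fin N → ℝ)).2) ∧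
          (∀ (x : X) (v : E x) (r : ℝ),
            (h (TotalSpace.mk x (r • v)) : X × (Fin N → ℝ)).2 =
              r • (h (TotalSpace.mk x v) : X × (Fin N → ℝ)).2) := by
  obtain ⟨N, hN, Φ, hΦ, hinj⟩ := swan_embed (F := F) (E := E)
  choose U hUo hxU P s hPc hsc hP hs using swan_local Φ hΦ hinj
  have hpr : Continuous (fun z : TotalSpace F E => z.proj) := FiberBundle.continuous_proj F E
  let p : X → Matrix (Fin N) (Fin N) ℝ := fun x => P x x
  have hp : ∀ x, p x * p x = p x ∧ (p x)ᵀ = p x ∧ ∀ v, p x *ᵥ v = v ↔ ∃ w, Φ x w = v :=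
    fun x => hP x x (hxU x)
  have hpc : Continuous p := by
    rw [continuous_iff_continuousAt]
    intro x
    refine ((hPc x).continuousAt ((hUo x).mem_nhds (hxU x))).congr ?_
    filter_upwards [(hUo x).mem_nhds (hxU x)] with y hy
    obtain ⟨h1, h2, h3⟩ := hP x y hy
    obtain ⟨h4, h5, h6⟩ := hp y
    exact swan_unique _ _ h1 h2 h4 h5 (fun v => (h3 v).trans (h6 v).symm)
  refine ⟨N, hN, ⟨p, hpc⟩, fun x => ⟨(hp x).1, (hp x).2.1⟩, ?_⟩
  have hfix : ∀ x (v : E x), p x *ᵥ Φ x v = Φ x v := fun x v => ((hp x).2.2 _).2 ⟨v, rfl⟩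
  let inv : {z : X × (Fin N → ℝ) // p z.1 *ᵥ z.2 = z.2} → TotalSpace F E :=
    fun z => s z.1.1 z.1
  have hinv : ∀ z (hz : p z.1 *ᵥ z.2 = z.2) x, z.1 ∈ U x → inv ⟨z, hz⟩ = s x z := by
    rintro ⟨y, v⟩ hz x hy
    obtain ⟨w, rfl⟩ := ((hp y).2.2 v).1 hz
    exact (hs y y (hxU y) w).trans (hs x y hy w).symm
  have hinvc : Continuous inv := by
    rw [continuous_iff_continuousAt]
    rintro ⟨z, hz⟩
    have ho : IsOpen (U z.1 ×ˢ (Set.univ : Set (Fin N → ℝ))) := (hUo z.1).prod isOpen_univ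
    have hm : z ∈ U z.1 ×ˢ (Set.univ : Set (Fin N → ℝ)) := ⟨hxU z.1, trivial⟩
    have h1 : ContinuousAt (s z.1) z := (hsc z.1).continuousAt (ho.mem_nhds hm)
    have h2 : ContinuousAt (fun y : {z : X × (Fin N → ℝ) // p z.1 *ᵥ z.2 = z.2} => s z.1 y.1)
        ⟨z, hz⟩ := ContinuousAt.comp (g := s z.1) h1 continuous_subtype_val.continuousAt
    refine h2.congr ?_
    filter_upwards [(ho.preimage continuous_subtype_val).mem_nhds hm] with y hy
    exact (hinv y.1 y.2 z.1 hy.1).symm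
  let h : TotalSpace F E ≃ₜ {z : X × (Fin N → ℝ) // p z.1 *ᵥ z.2 = z.2} :=
    { toFun := fun z => ⟨(z.proj, Φ z.proj z.2), hfix _ _⟩
      invFun := inv
      left_inv := fun z => hs z.proj z.proj (hxU _) z.2
      right_inv := by
        rintro ⟨⟨y, v⟩, hz⟩
        obtain ⟨w, rfl⟩ := ((hp y).2.2 v).1 hz
        have : inv ⟨(y, Φ y w), hz⟩ = ⟨y, w⟩ := hs y y (hxU y) w
        rw [this]
      continuous_toFun := (hpr.prodMk hΦ).subtype_mk _
      continuous_invFun := hinvc }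
  exact ⟨h, fun z => rfl, fun x v w => (Φ x).map_add v w, fun x v r => (Φ x).map_smul r v⟩
end

section
/- Let Q_k denote the negative-definite quadratic form Q_k(x) = −(x₁² + ⋯ + x_k²) on ℝᵏ, so that the Clifford algebra Cℓ_k = CliffordAlgebra(Q_k) is the real algebra generated by e₁,…,e_k with e_i² = −1 and e_i e_j + e_j e_i = 0 for i ≠ j. Then for every k ≥ 0 there is an isomorphism of ℝ-algebras Cℓ_{k+8} ≅ Cℓ_k ⊗ℝ M₁₆(ℝ). -/
open scoped TensorProduct

/-- The negative-definite quadratic form `Q_k(x) = −(x₁² + ⋯ + x_k²)` on `ℝᵏ`.  The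
Clifford algebra `CliffordAlgebra (negDefiniteForm k)` is then the real algebra generated
by `e₁, …, e_k` with `eᵢ² = −1` and `eᵢeⱼ + eⱼeᵢ = 0` for `i ≠ j`. -/
noncomputable def negDefiniteForm (k : ℕ) : QuadraticForm ℝ (Fin k → ℝ) :=
  QuadraticMap.weightedSumSquares ℝ (fun _ : Fin k => (-1 : ℝ))

namespace RealCliffordPeriodicity

open CliffordAlgebra
open scoped Quaternion

noncomputable section

section Step

variable {M : Type} [AddCommGroup M] [Module ℝ M] (Q : QuadraticForm ℝ M) (s : ℝ)

/-- `Q ⊕ ⟨s, s⟩`. -/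
abbrev ext2 : QuadraticForm ℝ (M × (ℝ × ℝ)) := Q.prod (CliffordAlgebraQuaternion.Q s s)

/-- first new generator -/
def gA : CliffordAlgebra (ext2 Q s) := ι (ext2 Q s) (0, (1, 0))
/-- second new generator -/
def gB : CliffordAlgebra (ext2 Q s) := ι (ext2 Q s) (0, (0, 1))

lemma gA_sq : gA Q s * gA Q s = s • 1 := by
  rw [gA, ι_sq_scalar, Algebra.algebraMap_eq_smul_one]; simp
lemma gB_sq : gB Q s * gB Q s = s • 1 := by
  rw [gB, ι_sq_scalar, Algebra.algebraMap_eq_smul_one]; simp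
lemma gB_gA : gB Q s * gA Q s = - (gA Q s * gB Q s) := by
  apply ι_mul_ι_comm_of_isOrtho
  simp [QuadraticMap.isOrtho_def]
lemma v_gA (v : M) : ι (ext2 Q s) (v, 0) * gA Q s = - (gA Q s * ι (ext2 Q s) (v, 0)) := by
  apply ι_mul_ι_comm_of_isOrtho
  simp [QuadraticMap.isOrtho_def]
lemma v_gB (v : M) : ι (ext2 Q s) (v, 0) * gB Q s = - (gB Q s * ι (ext2 Q s) (v, 0)) := by
  apply ι_mul_ι_comm_of_isOrtho
  simp [QuadraticMap.isOrtho_def]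

/-- quaternion basis inside the Clifford algebra -/
def qb : QuaternionAlgebra.Basis (CliffordAlgebra (ext2 Q s)) s 0 s where
  i := gA Q s
  j := gB Q s
  k := gA Q s * gB Q s
  i_mul_i := by rw [gA_sq]; simp
  j_mul_j := gB_sq Q s
  i_mul_j := rfl
  j_mul_i := by rw [gB_gA]; simp

variable {s}

/-- the forward map -/
def fwd (hs : s * s = 1) :
    CliffordAlgebra (ext2 Q s) →ₐ[ℝ] CliffordAlgebra (-Q) ⊗[ℝ] ℍ[ℝ, s, 0, s] :=
  CliffordAlgebra.lift (ext2 Q s)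
    ⟨{ toFun := fun x => ι (-Q) x.1 ⊗ₜ (⟨0, 0, 0, 1⟩ : ℍ[ℝ, s, 0, s]) +
          1 ⊗ₜ (⟨0, x.2.1, x.2.2, 0⟩ : ℍ[ℝ, s, 0, s])
       map_add' := fun x y => by
        have : (⟨0, (x + y).2.1, (x + y).2.2, 0⟩ : ℍ[ℝ, s, 0, s]) =
          ⟨0, x.2.1, x.2.2, 0⟩ + ⟨0, y.2.1, y.2.2, 0⟩ := by ext <;> simp
        rw [this, Prod.fst_add, map_add, TensorProduct.add_tmul, TensorProduct.tmul_add]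
        abel
       map_smul' := fun r x => by
        have : (⟨0, (r • x).2.1, (r • x).2.2, 0⟩ : ℍ[ℝ, s, 0, s]) =
          r • ⟨0, x.2.1, x.2.2, 0⟩ := by ext <;> simp
        rw [this, Prod.smul_fst, map_smul]
        simp only [TensorProduct.tmul_smul, ← TensorProduct.smul_tmul', smul_add, RingHom.id_apply] }, fun x => by
      obtain ⟨v, a, b⟩ := x
      dsimp only [LinearMap.coe_mk, AddHom.coe_mk]
      have h1 : (⟨0, 0, 0, 1⟩ : ℍ[ℝ, s, 0, s]) * ⟨0, 0, 0, 1⟩ = -1 := by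
        ext <;> simp [hs]
      have h2 : (⟨0, 0, 0, 1⟩ : ℍ[ℝ, s, 0, s]) * ⟨0, a, b, 0⟩ +
          ⟨0, a, b, 0⟩ * ⟨0, 0, 0, 1⟩ = 0 := by
        ext <;> simp
      have h3 : (⟨0, a, b, 0⟩ : ℍ[ℝ, s, 0, s]) * ⟨0, a, b, 0⟩ =
          (s * (a * a) + s * (b * b)) • 1 := by
        ext <;> simp <;> ring
      have h4 := congrArg (fun t => ι (-Q) v ⊗ₜ[ℝ] t) h2
      simp only [TensorProduct.tmul_add, TensorProduct.tmul_zero] at h4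
      simp only [mul_add, add_mul, Algebra.TensorProduct.tmul_mul_tmul, mul_one, one_mul, h1, h3,
        ι_sq_scalar]
      have h5 : ∀ x y z w : CliffordAlgebra (-Q) ⊗[ℝ] ℍ[ℝ, s, 0, s], y + w = 0 →
          x + y + (w + z) = x + z := fun x y z w h => by
        rw [add_assoc, ← add_assoc y, h, zero_add]
      have h6 : ∀ x y z w : CliffordAlgebra (-Q) ⊗[ℝ] ℍ[ℝ, s, 0, s], y + w = 0 →
          x + w + (y + z) = x + z := fun x y z w h => by
        rw [add_assoc, ← add_assoc w, add_comm w, h, zero_add]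
      first | rw [h5 _ _ _ _ h4] | rw [h6 _ _ _ _ h4]
      simp only [Algebra.algebraMap_eq_smul_one, TensorProduct.tmul_smul,
        TensorProduct.tmul_neg, ← TensorProduct.smul_tmul', Algebra.TensorProduct.one_def,
        QuadraticMap.prod_apply, CliffordAlgebraQuaternion.Q_apply, neg_apply,
        neg_smul]
      simp only [TensorProduct.neg_tmul, neg_neg, TensorProduct.tmul_smul,
        TensorProduct.smul_tmul']
      simp only [TensorProduct.add_tmul, add_smul, TensorProduct.smul_tmul']⟩

/-- the embedding of `Cl(-Q)`, twisted by `ω` -/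
def bwdL (hs : s * s = 1) : CliffordAlgebra (-Q) →ₐ[ℝ] CliffordAlgebra (ext2 Q s) :=
  CliffordAlgebra.lift (-Q)
    ⟨(LinearMap.mulRight ℝ (-(gA Q s * gB Q s))) ∘ₗ (ι (ext2 Q s)) ∘ₗ LinearMap.inl ℝ M (ℝ × ℝ),
     fun v => by
      simp only [LinearMap.comp_apply, LinearMap.inl_apply, LinearMap.mulRight_apply]
      have hvA := v_gA Q s v
      have hvB := v_gB Q s v
      have hBA := gB_gA Q s
      have hA := gA_sq Q s
      have hB := gB_sq Q s
      have hv : ι (ext2 Q s) (v, 0) * ι (ext2 Q s) (v, 0) = Q v • 1 := by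
        rw [ι_sq_scalar, Algebra.algebraMap_eq_smul_one]; simp
      rw [Algebra.algebraMap_eq_smul_one]
      generalize ι (ext2 Q s) (v, 0) = V at *
      generalize gA Q s = A at *
      generalize gB Q s = B at *
      have hc : A * B * V = V * (A * B) := by
        rw [← mul_assoc, hvA, neg_mul, mul_assoc A V B, hvB, mul_neg, neg_neg, mul_assoc]
      have hw : A * B * (A * B) = -1 := by
        rw [mul_assoc, ← mul_assoc B, hBA, neg_mul, mul_neg, mul_assoc A B B, hB]
        simp [hA, smul_smul, hs]
      calc V * -(A * B) * (V * -(A * B)) = V * (A * B * V) * (A * B) := by noncomm_ring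
        _ = V * V * (A * B * (A * B)) := by rw [hc]; noncomm_ring
        _ = _ := by rw [hv, hw]; simp⟩

lemma bwd_comm (hs : s * s = 1) (x : CliffordAlgebra (-Q)) (y : ℍ[ℝ, s, 0, s]) :
    Commute (bwdL Q hs x) ((qb Q s).liftHom y) := by
  have key : ∀ x, Commute (bwdL Q hs x) (gA Q s) ∧ Commute (bwdL Q hs x) (gB Q s) := by
    intro x
    induction x using CliffordAlgebra.induction with
    | algebraMap r => 
      rw [AlgHom.commutes]
      exact ⟨Algebra.commutes _ _, Algebra.commutes _ _⟩
    | mul a b ha hb => rw [map_mul]; exact ⟨ha.1.mul_left hb.1, ha.2.mul_left hb.2⟩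
    | add a b ha hb => rw [map_add]; exact ⟨ha.1.add_left hb.1, ha.2.add_left hb.2⟩
    | ι v =>
      rw [bwdL, lift_ι_apply]
      simp only [LinearMap.comp_apply, LinearMap.inl_apply, LinearMap.mulRight_apply]
      have hvA := v_gA Q s v
      have hvB := v_gB Q s v
      have hBA := gB_gA Q s
      generalize ι (ext2 Q s) (v, 0) = V at *
      generalize gA Q s = A at *
      generalize gB Q s = B at *
      constructor
      · show V * -(A * B) * A = A * (V * -(A * B))
        calc V * -(A * B) * A = -(V * A * (B * A)) := by noncomm_ring
          _ = _ := by rw [hvA, hBA]; noncomm_ring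
      · show V * -(A * B) * B = B * (V * -(A * B))
        calc V * -(A * B) * B = -(V * A * B * B) := by noncomm_ring
          _ = V * (B * A) * B := by rw [hBA]; noncomm_ring
          _ = (V * B) * (A * B) := by noncomm_ring
          _ = _ := by rw [hvB]; noncomm_ring
  obtain ⟨h1, h2⟩ := key x
  show Commute _ (algebraMap ℝ _ y.re + y.imI • gA Q s + y.imJ • gB Q s +
    y.imK • (gA Q s * gB Q s))
  exact (((Algebra.commute_algebraMap_right _ _).add_right (h1.smul_right _)).add_right
    (h2.smul_right _)).add_right ((h1.mul_right h2).smul_right _)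

/-- the inverse map -/
def bwd (hs : s * s = 1) :
    CliffordAlgebra (-Q) ⊗[ℝ] ℍ[ℝ, s, 0, s] →ₐ[ℝ] CliffordAlgebra (ext2 Q s) :=
  Algebra.TensorProduct.lift (bwdL Q hs) (qb Q s).liftHom (bwd_comm Q hs)

lemma fwd_ι (hs : s * s = 1) (x : M × (ℝ × ℝ)) :
    fwd Q hs (ι (ext2 Q s) x) = ι (-Q) x.1 ⊗ₜ (⟨0, 0, 0, 1⟩ : ℍ[ℝ, s, 0, s]) +
          1 ⊗ₜ (⟨0, x.2.1, x.2.2, 0⟩ : ℍ[ℝ, s, 0, s]) := by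
  rw [fwd, lift_ι_apply]; rfl

lemma bwdL_ι (hs : s * s = 1) (v : M) :
    bwdL Q hs (ι (-Q) v) = ι (ext2 Q s) (v, 0) * -(gA Q s * gB Q s) := by
  rw [bwdL, lift_ι_apply]; rfl

lemma omega_sq (hs : s * s = 1) : gA Q s * gB Q s * (gA Q s * gB Q s) = -1 := by
  rw [mul_assoc, ← mul_assoc (gB Q s), gB_gA, neg_mul, mul_neg, mul_assoc (gA Q s) (gB Q s),
    gB_sq]
  simp [gA_sq, smul_smul, hs]

lemma lift_mk (a b c d : ℝ) : (qb Q s).liftHom ⟨a, b, c, d⟩ = algebraMap ℝ _ a + b • gA Q s +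
    c • gB Q s + d • (gA Q s * gB Q s) := rfl

/-- `Cl(Q ⊕ ⟨s,s⟩) ≃ Cl(-Q) ⊗ ℍ[ℝ,s,0,s]` -/
def stepEquiv (hs : s * s = 1) :
    CliffordAlgebra (ext2 Q s) ≃ₐ[ℝ] CliffordAlgebra (-Q) ⊗[ℝ] ℍ[ℝ, s, 0, s] :=
  AlgEquiv.ofAlgHom (fwd Q hs) (bwd Q hs)
    (by
      have e1 : fwd Q hs (gA Q s) = 1 ⊗ₜ (⟨0, 1, 0, 0⟩ : ℍ[ℝ, s, 0, s]) := by
        rw [gA, fwd_ι]; simp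
      have e2 : fwd Q hs (gB Q s) = 1 ⊗ₜ (⟨0, 0, 1, 0⟩ : ℍ[ℝ, s, 0, s]) := by
        rw [gB, fwd_ι]; simp
      have e3 : fwd Q hs (-(gA Q s * gB Q s)) = 1 ⊗ₜ (⟨0, 0, 0, -1⟩ : ℍ[ℝ, s, 0, s]) := by
        rw [map_neg, map_mul, e1, e2, Algebra.TensorProduct.tmul_mul_tmul, mul_one,
          ← TensorProduct.tmul_neg]
        congr 1
        ext <;> simp
      apply Algebra.TensorProduct.ext
      · apply CliffordAlgebra.hom_ext
        ext v
        simp only [LinearMap.comp_apply, AlgHom.toLinearMap_apply, AlgHom.comp_apply,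
          Algebra.TensorProduct.includeLeft_apply, bwd, Algebra.TensorProduct.lift_tmul, map_one,
          mul_one, bwdL_ι, AlgHom.id_apply]
        rw [map_mul, e3, fwd_ι]
        have hz : (⟨0, (0 : ℝ × ℝ).1, (0 : ℝ × ℝ).2, 0⟩ : ℍ[ℝ, s, 0, s]) = 0 := rfl
        dsimp only
        rw [hz, TensorProduct.tmul_zero, add_zero, Algebra.TensorProduct.tmul_mul_tmul, mul_one]
        congr 1
        ext <;> simp [hs]
      · apply QuaternionAlgebra.hom_ext
        · show fwd Q hs (bwdL Q hs 1 * (qb Q s).liftHom ⟨0, 1, 0, 0⟩) = 1 ⊗ₜ ⟨0, 1, 0, 0⟩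
          rw [map_one, one_mul, lift_mk]
          simp [e1]
        · show fwd Q hs (bwdL Q hs 1 * (qb Q s).liftHom ⟨0, 0, 1, 0⟩) = 1 ⊗ₜ ⟨0, 0, 1, 0⟩
          rw [map_one, one_mul, lift_mk]
          simp [e2])
    (by
      apply CliffordAlgebra.hom_ext
      ext x
      all_goals
        simp only [LinearMap.comp_apply, AlgHom.toLinearMap_apply, AlgHom.comp_apply, fwd_ι,
          AlgHom.id_apply, map_add, bwd, Algebra.TensorProduct.lift_tmul, bwdL_ι, lift_mk]
        simp [mul_assoc, omega_sq Q hs]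
      all_goals
        rw [← Prod.zero_eq_mk, map_zero, zero_add]
        rfl)

end Step

/-- split quaternions as matrices -/
def sb : QuaternionAlgebra.Basis (Matrix (Fin 2) (Fin 2) ℝ) (1 : ℝ) 0 1 where
  i := !![1, 0; 0, -1]
  j := !![0, 1; 1, 0]
  k := !![0, 1; -1, 0]
  i_mul_i := by ext i j; fin_cases i <;> fin_cases j <;> simp
  j_mul_j := by ext i j; fin_cases i <;> fin_cases j <;> simp
  i_mul_j := by ext i j; fin_cases i <;> fin_cases j <;> simp
  j_mul_i := by ext i j; fin_cases i <;> fin_cases j <;> simp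

lemma sb_lift (q : ℍ[ℝ, 1, 0, 1]) :
    sb.liftHom q = !![q.re + q.imI, q.imJ + q.imK; q.imJ - q.imK, q.re - q.imI] := by
  show algebraMap ℝ _ q.re + q.imI • sb.i + q.imJ • sb.j + q.imK • sb.k = _
  ext i j; fin_cases i <;> fin_cases j <;> simp [Matrix.algebraMap_matrix_apply, sb] <;> ring

/-- `ℍ[ℝ,1,0,1] ≃ M₂(ℝ)` -/
def splitEquiv : ℍ[ℝ, 1, 0, 1] ≃ₐ[ℝ] Matrix (Fin 2) (Fin 2) ℝ :=
  AlgEquiv.ofBijective sb.liftHom ⟨fun p q h => by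
    rw [sb_lift, sb_lift] at h
    have h00 := congrFun (congrFun h 0) 0
    have h01 := congrFun (congrFun h 0) 1
    have h10 := congrFun (congrFun h 1) 0
    have h11 := congrFun (congrFun h 1) 1
    simp at h00 h01 h10 h11
    ext <;> linarith, fun m => by
    refine ⟨⟨(m 0 0 + m 1 1) / 2, (m 0 0 - m 1 1) / 2, (m 0 1 + m 1 0) / 2,
      (m 0 1 - m 1 0) / 2⟩, ?_⟩
    rw [sb_lift]
    ext i j; fin_cases i <;> fin_cases j <;> simp <;> ring⟩

/-- left multiplication -/
def lb : QuaternionAlgebra.Basis (Matrix (Fin 4) (Fin 4) ℝ) (-1 : ℝ) 0 (-1) where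
  i := !![0,-1,0,0;1,0,0,0;0,0,0,-1;0,0,1,0]
  j := !![0,0,-1,0;0,0,0,1;1,0,0,0;0,-1,0,0]
  k := !![0,0,0,-1;0,0,-1,0;0,1,0,0;1,0,0,0]
  i_mul_i := by ext i j; fin_cases i <;> fin_cases j <;> simp [Matrix.mul_apply, Fin.sum_univ_succ]
  j_mul_j := by ext i j; fin_cases i <;> fin_cases j <;> simp [Matrix.mul_apply, Fin.sum_univ_succ]
  i_mul_j := by ext i j; fin_cases i <;> fin_cases j <;> simp [Matrix.mul_apply, Fin.sum_univ_succ]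
  j_mul_i := by ext i j; fin_cases i <;> fin_cases j <;> simp [Matrix.mul_apply, Fin.sum_univ_succ]

/-- right multiplication by the conjugate -/
def rb : QuaternionAlgebra.Basis (Matrix (Fin 4) (Fin 4) ℝ) (-1 : ℝ) 0 (-1) where
  i := !![0,1,0,0;-1,0,0,0;0,0,0,-1;0,0,1,0]
  j := !![0,0,1,0;0,0,0,1;-1,0,0,0;0,-1,0,0]
  k := !![0,0,0,1;0,0,-1,0;0,1,0,0;-1,0,0,0]
  i_mul_i := by ext i j; fin_cases i <;> fin_cases j <;> simp [Matrix.mul_apply, Fin.sum_univ_succ]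
  j_mul_j := by ext i j; fin_cases i <;> fin_cases j <;> simp [Matrix.mul_apply, Fin.sum_univ_succ]
  i_mul_j := by ext i j; fin_cases i <;> fin_cases j <;> simp [Matrix.mul_apply, Fin.sum_univ_succ]
  j_mul_i := by ext i j; fin_cases i <;> fin_cases j <;> simp [Matrix.mul_apply, Fin.sum_univ_succ]

lemma lb_lift (q : ℍ[ℝ, -1, 0, -1]) :
    lb.liftHom q = !![q.re, -q.imI, -q.imJ, -q.imK; q.imI, q.re, -q.imK, q.imJ;
      q.imJ, q.imK, q.re, -q.imI; q.imK, -q.imJ, q.imI, q.re] := by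
  show algebraMap ℝ _ q.re + q.imI • lb.i + q.imJ • lb.j + q.imK • lb.k = _
  ext i j; fin_cases i <;> fin_cases j <;> simp [Matrix.algebraMap_matrix_apply, lb]

lemma rb_lift (q : ℍ[ℝ, -1, 0, -1]) :
    rb.liftHom q = !![q.re, q.imI, q.imJ, q.imK; -q.imI, q.re, -q.imK, q.imJ;
      -q.imJ, q.imK, q.re, -q.imI; -q.imK, -q.imJ, q.imI, q.re] := by
  show algebraMap ℝ _ q.re + q.imI • rb.i + q.imJ • rb.j + q.imK • rb.k = _
  ext i j; fin_cases i <;> fin_cases j <;> simp [Matrix.algebraMap_matrix_apply, rb]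

lemma lr_comm (p q : ℍ[ℝ, -1, 0, -1]) : Commute (lb.liftHom p) (rb.liftHom q) := by
  rw [lb_lift, rb_lift]
  show _ * _ = _ * _
  ext i j; fin_cases i <;> fin_cases j <;> simp [Matrix.mul_apply, Fin.sum_univ_succ] <;> ring

/-- `ℍ ⊗ ℍ → M₄(ℝ)` -/
def hh : ℍ[ℝ, -1, 0, -1] ⊗[ℝ] ℍ[ℝ, -1, 0, -1] →ₐ[ℝ] Matrix (Fin 4) (Fin 4) ℝ :=
  Algebra.TensorProduct.lift lb.liftHom rb.liftHom lr_comm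

/-- the standard basis of the quaternions -/
def u : Fin 4 → ℍ[ℝ, -1, 0, -1] := ![⟨1, 0, 0, 0⟩, ⟨0, 1, 0, 0⟩, ⟨0, 0, 1, 0⟩, ⟨0, 0, 0, 1⟩]

lemma hh_surj : Function.Surjective hh := by
  intro m
  refine ⟨u 0 ⊗ₜ ⟨(m 0 0 + m 1 1 + m 2 2 + m 3 3) / 4, (m 0 1 - m 1 0 - m 2 3 + m 3 2) / 4, (m 0 2 + m 1 3 - m 2 0 - m 3 1) / 4, (m 0 3 - m 1 2 + m 2 1 - m 3 0) / 4⟩ +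
    u 1 ⊗ₜ ⟨(- m 0 1 + m 1 0 - m 2 3 + m 3 2) / 4, (m 0 0 + m 1 1 - m 2 2 - m 3 3) / 4, (- m 0 3 + m 1 2 + m 2 1 - m 3 0) / 4, (m 0 2 + m 1 3 + m 2 0 + m 3 1) / 4⟩ +
    u 2 ⊗ₜ ⟨(- m 0 2 + m 1 3 + m 2 0 - m 3 1) / 4, (m 0 3 + m 1 2 + m 2 1 + m 3 0) / 4, (m 0 0 - m 1 1 + m 2 2 - m 3 3) / 4, (- m 0 1 - m 1 0 + m 2 3 + m 3 2) / 4⟩ +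
    u 3 ⊗ₜ ⟨(- m 0 3 - m 1 2 + m 2 1 + m 3 0) / 4, (- m 0 2 + m 1 3 - m 2 0 + m 3 1) / 4, (m 0 1 + m 1 0 + m 2 3 + m 3 2) / 4, (m 0 0 - m 1 1 - m 2 2 + m 3 3) / 4⟩, ?_⟩
  simp only [map_add, hh, Algebra.TensorProduct.lift_tmul, lb_lift, rb_lift]
  ext i j
  fin_cases i <;> fin_cases j <;> simp [u, Matrix.mul_apply, Fin.sum_univ_succ] <;> ring

lemma hh_bij : Function.Bijective hh := by
  refine ⟨?_, hh_surj⟩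
  have : Module.finrank ℝ (ℍ[ℝ, -1, 0, -1] ⊗[ℝ] ℍ[ℝ, -1, 0, -1]) =
      Module.finrank ℝ (Matrix (Fin 4) (Fin 4) ℝ) := by
    rw [Module.finrank_tensorProduct, QuaternionAlgebra.finrank_eq_four, Module.finrank_matrix]
    simp
  exact (LinearMap.injective_iff_surjective_of_finrank_eq_finrank (f := hh.toLinearMap) this).2
    hh_surj

/-- `s` times the sum of squares -/
abbrev W (s : ℝ) (k : ℕ) : QuadraticForm ℝ (Fin k → ℝ) :=
  QuadraticMap.weightedSumSquares ℝ (fun _ : Fin k => s)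

/-- splitting off two coordinates -/
def isoW (s : ℝ) (k : ℕ) :
    (W s (k + 2)).IsometryEquiv ((W s k).prod (CliffordAlgebraQuaternion.Q s s)) where
  toFun x := (fun i => x i.succ.succ, (x 0, x 1))
  invFun y := Fin.cons y.2.1 (Fin.cons y.2.2 y.1)
  left_inv x := by
    ext i
    refine Fin.cases ?_ (fun i => Fin.cases ?_ (fun i => ?_) i) i <;> simp
  right_inv y := by
    ext <;> simp
  map_add' x y := rfl
  map_smul' c x := rfl
  map_app' x := by
    simp [QuadraticMap.weightedSumSquares_apply, Fin.sum_univ_succ]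
    ring

lemma neg_W (s : ℝ) (k : ℕ) : -(W s k) = W (-s) k := by
  ext x
  simp [QuadraticMap.weightedSumSquares_apply]

/-- regrouping -/
def big2 {T C : Type} [Ring T] [Algebra ℝ T] [Ring C] [Algebra ℝ C]
    (e : T ⊗[ℝ] T ≃ₐ[ℝ] Matrix (Fin 16) (Fin 16) ℝ) :
    (C ⊗[ℝ] T) ⊗[ℝ] T ≃ₐ[ℝ] C ⊗[ℝ] Matrix (Fin 16) (Fin 16) ℝ :=
  (Algebra.TensorProduct.assoc ℝ ℝ ℝ C T T).trans <|
    Algebra.TensorProduct.congr AlgEquiv.refl e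

/-- `(P ⊗ H) ⊗ (P ⊗ H) ≃ M₁₆` -/
def big {H P : Type} [Ring H] [Ring P] [Algebra ℝ H] [Algebra ℝ P]
    (eP : P ≃ₐ[ℝ] Matrix (Fin 2) (Fin 2) ℝ) (eH : H ⊗[ℝ] H ≃ₐ[ℝ] Matrix (Fin 4) (Fin 4) ℝ) :
    (P ⊗[ℝ] H) ⊗[ℝ] (P ⊗[ℝ] H) ≃ₐ[ℝ] Matrix (Fin 16) (Fin 16) ℝ :=
  (Algebra.TensorProduct.tensorTensorTensorComm ℝ ℝ ℝ ℝ P H P H).trans <|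
    (Algebra.TensorProduct.congr ((Algebra.TensorProduct.congr eP eP).trans
      (Matrix.kroneckerAlgEquiv (Fin 2) (Fin 2) ℝ)) eH).trans <|
    (Matrix.kroneckerAlgEquiv (Fin 2 × Fin 2) (Fin 4) ℝ).trans <|
    Matrix.reindexAlgEquiv ℝ ℝ (Fintype.equivFinOfCardEq (by simp))

/-- `Cl^s_{k+2} ≃ Cl^{-s}_k ⊗ ℍ[ℝ,s,0,s]` -/
def stepW (s t : ℝ) (hs : s * s = 1) (ht : -s = t) (k : ℕ) : CliffordAlgebra (W s (k + 2)) ≃ₐ[ℝ]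
    CliffordAlgebra (W t k) ⊗[ℝ] ℍ[ℝ, s, 0, s] :=
  (equivOfIsometry (isoW s k)).trans <| (ht ▸ neg_W s k : -(W s k) = W t k) ▸ stepEquiv (W s k) hs

/-- `Cl_{k+4} ≃ Cl_k ⊗ (M₂ ⊗ ℍ)` -/
def step4 (k : ℕ) : CliffordAlgebra (W (-1) (k + 4)) ≃ₐ[ℝ]
    CliffordAlgebra (W (-1) k) ⊗[ℝ] (ℍ[ℝ, 1, 0, 1] ⊗[ℝ] ℍ[ℝ, -1, 0, -1]) :=
  let h : CliffordAlgebra (W (-1) (k + 4)) ≃ₐ[ℝ]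
      CliffordAlgebra (W 1 (k + 2)) ⊗[ℝ] ℍ[ℝ, -1, 0, -1] :=
    stepW (-1) 1 (by norm_num) (by norm_num) (k + 2)
  (h.trans (Algebra.TensorProduct.congr (stepW 1 (-1) (by norm_num) rfl k) AlgEquiv.refl)).trans
    (Algebra.TensorProduct.assoc ℝ ℝ ℝ _ _ _)

end

end RealCliffordPeriodicity

/-- Atiyah–Bott–Shapiro periodicity, real case: `Cℓ_{k+8} ≅ Cℓ_k ⊗ℝ M₁₆(ℝ)`
as ℝ-algebras. -/
theorem real_clifford_periodicity (k : ℕ) :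
    Nonempty (CliffordAlgebra (negDefiniteForm (k + 8)) ≃ₐ[ℝ]
      (CliffordAlgebra (negDefiniteForm k) ⊗[ℝ] Matrix (Fin 16) (Fin 16) ℝ)) := by
  open RealCliffordPeriodicity in
  exact ⟨((step4 (k + 4)).trans (Algebra.TensorProduct.congr (step4 k) AlgEquiv.refl)).trans
    (big2 (big splitEquiv (AlgEquiv.ofBijective hh hh_bij)))⟩
end

section
/- Let Q_k denote the negative-definite quadratic form Q_k(x) = −(x₁² + ⋯ + x_k²) on ℝᵏ, and let the complex Clifford algebra be Cℓᶜ_k = ℂ ⊗ℝ CliffordAlgebra(Q_k). Then for every k ≥ 0 there is an isomorphism of ℂ-algebras Cℓᶜ_{k+2} ≅ Cℓᶜ_k ⊗ℂ M₂(ℂ). -/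
open scoped TensorProduct

open scoped Quaternion

namespace CliffPer

theorem neg_succ (k : ℕ) (v : Fin (k+2) → ℝ) :
    negDefiniteForm (k+2) v = negDefiniteForm k (fun i => v i.succ.succ) - v 0 * v 0 - v 1 * v 1 := by
  simp only [negDefiniteForm, QuadraticMap.weightedSumSquares_apply, Fin.sum_univ_succ]
  simp
  ring

def tail (k : ℕ) : (Fin (k+2) → ℝ) →ₗ[ℝ] (Fin k → ℝ) where
  toFun v i := v i.succ.succ
  map_add' _ _ := rfl
  map_smul' _ _ := rfl

def incl (k : ℕ) : (Fin k → ℝ) →ₗ[ℝ] (Fin (k+2) → ℝ) where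
  toFun w := Fin.cons 0 (Fin.cons 0 w)
  map_add' _ _ := by
    ext i; refine Fin.cases ?_ (fun i => Fin.cases ?_ (fun i => ?_) i) i <;> simp
  map_smul' _ _ := by
    ext i; refine Fin.cases ?_ (fun i => Fin.cases ?_ (fun i => ?_) i) i <;> simp

theorem tail_incl (k w) : tail k (incl k w) = w := rfl
theorem incl_zero (k w) : incl k w 0 = 0 := rfl
theorem incl_one (k w) : incl k w 1 = 0 := rfl

theorem decomp (k : ℕ) (v : Fin (k+2) → ℝ) :
    v = incl k (tail k v) + v 0 • Pi.single 0 1 + v 1 • Pi.single 1 1 := by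
  ext i; refine Fin.cases ?_ (fun i => Fin.cases ?_ (fun i => ?_) i) i
  · simp [incl_zero]
  · simp [incl_one]
  · have h : (i.succ.succ : Fin (k+2)) ≠ 1 := by simp [Fin.ext_iff]
    simp [h, incl, tail]

section
variable {k : ℕ} {B : Type*} [Ring B] [Algebra ℝ B]

def ext2 (D : (Fin k → ℝ) →ₗ[ℝ] B) (e f : B) : (Fin (k+2) → ℝ) →ₗ[ℝ] B :=
  D ∘ₗ tail k + (LinearMap.proj 0).smulRight e + (LinearMap.proj 1).smulRight f

theorem ext2_apply (D : (Fin k → ℝ) →ₗ[ℝ] B) (e f : B) (v) :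
    ext2 D e f v = D (tail k v) + v 0 • e + v 1 • f := rfl

theorem ext2_sq (D : (Fin k → ℝ) →ₗ[ℝ] B) (e f : B)
    (hD : ∀ w, D w * D w = algebraMap ℝ B (negDefiniteForm k w))
    (he : e * e = -1) (hf : f * f = -1) (hfe : f * e = - (e * f))
    (hDe : ∀ w, D w * e = - (e * D w)) (hDf : ∀ w, D w * f = - (f * D w)) (v) :
    ext2 D e f v * ext2 D e f v = algebraMap ℝ B (negDefiniteForm (k+2) v) := by
  rw [neg_succ, ext2_apply]
  simp only [mul_add, add_mul, smul_mul_assoc, mul_smul_comm, hD, he, hf, hfe, hDe, hDf, map_sub,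
    Algebra.algebraMap_eq_smul_one]
  simp only [tail, LinearMap.coe_mk, AddHom.coe_mk]
  module

end

/-- Complex Clifford algebra, with only its complex algebra structure exposed. -/
def Cl (k : ℕ) : Type := ℂ ⊗[ℝ] CliffordAlgebra (negDefiniteForm k)

noncomputable instance (k : ℕ) : Ring (Cl k) :=
  inferInstanceAs (Ring (ℂ ⊗[ℝ] CliffordAlgebra (negDefiniteForm k)))

noncomputable instance (k : ℕ) : Algebra ℂ (Cl k) :=
  inferInstanceAs (Algebra ℂ (ℂ ⊗[ℝ] CliffordAlgebra (negDefiniteForm k)))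

noncomputable def cι (k : ℕ) : (Fin k → ℝ) →ₗ[ℝ] Cl k where
  toFun w := ((1 : ℂ) ⊗ₜ[ℝ] CliffordAlgebra.ι (negDefiniteForm k) w :
    ℂ ⊗[ℝ] CliffordAlgebra (negDefiniteForm k))
  map_add' v w := by rw [map_add, TensorProduct.tmul_add]; rfl
  map_smul' r w := by
    rw [map_smul, ← TensorProduct.smul_tmul]
    have : r • (1 : ℂ) = (r : ℂ) • (1 : ℂ) := by simp
    rw [this]
    exact (TensorProduct.smul_tmul' _ _ _).symm

theorem cι_sq (k w) : cι k w * cι k w = algebraMap ℝ _ (negDefiniteForm k w) := by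
  have h : ((1 : ℂ) ⊗ₜ[ℝ] CliffordAlgebra.ι (negDefiniteForm k) w :
    ℂ ⊗[ℝ] CliffordAlgebra (negDefiniteForm k)) * ((1 : ℂ) ⊗ₜ[ℝ] CliffordAlgebra.ι (negDefiniteForm k) w :
    ℂ ⊗[ℝ] CliffordAlgebra (negDefiniteForm k)) =
      algebraMap ℂ _ ((negDefiniteForm k w : ℝ) : ℂ) := by
    rw [Algebra.TensorProduct.tmul_mul_tmul, CliffordAlgebra.ι_sq_scalar,
      Algebra.algebraMap_eq_smul_one, ← TensorProduct.smul_tmul,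
      Algebra.TensorProduct.algebraMap_apply]
    simp
  rw [IsScalarTower.algebraMap_apply ℝ ℂ (Cl k)]
  exact h

theorem cι_anti (k : ℕ) (v w) (h : negDefiniteForm k (v + w) = negDefiniteForm k v + negDefiniteForm k w) :
   cι k v * cι k w = - (cι k w * cι k v) := by
  have := cι_sq k (v + w)
  rw [h, map_add, map_add, ← cι_sq, ← cι_sq] at this
  rw [eq_neg_iff_add_eq_zero]
  simp only [add_mul, mul_add] at this
  rw [← sub_eq_zero] at this
  rw [← this]; abel

section
variable {k : ℕ} {B : Type*} [Ring B] [Algebra ℂ B]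

noncomputable def clift (D : (Fin k → ℝ) →ₗ[ℝ] B)
    (hD : ∀ w, D w * D w = algebraMap ℝ B (negDefiniteForm k w)) :
    Cl k →ₐ[ℂ] B :=
  (Algebra.TensorProduct.lift (Algebra.ofId ℂ B) (CliffordAlgebra.lift _ ⟨D, hD⟩)
    fun _ _ => Algebra.commutes _ _ : ℂ ⊗[ℝ] CliffordAlgebra (negDefiniteForm k) →ₐ[ℂ] B)

theorem clift_cι (D : (Fin k → ℝ) →ₗ[ℝ] B) (hD) (w) : clift D hD (cι k w) = D w := by
  refine (Algebra.TensorProduct.lift_tmul (Algebra.ofId ℂ B) (CliffordAlgebra.lift _ ⟨D, hD⟩)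
    (fun _ _ => Algebra.commutes _ _) _ _).trans ?_
  simp

theorem chom_ext {f g : Cl k →ₐ[ℂ] B}
    (h : ∀ w, f (cι k w) = g (cι k w)) : f = g := by
  change (f : ℂ ⊗[ℝ] CliffordAlgebra (negDefiniteForm k) →ₐ[ℂ] B) = g
  apply Algebra.TensorProduct.ext (by ext)
  apply CliffordAlgebra.hom_ext
  apply LinearMap.ext h
end

abbrev H := ℍ[ℂ, -1, 0, -1]

def T (k : ℕ) : Type := Cl k ⊗[ℂ] H
noncomputable instance (k : ℕ) : Ring (T k) := inferInstanceAs (Ring (Cl k ⊗[ℂ] H))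
noncomputable instance (k : ℕ) : Algebra ℂ (T k) := inferInstanceAs (Algebra ℂ (Cl k ⊗[ℂ] H))

noncomputable def inl (k : ℕ) : Cl k →ₐ[ℂ] T k :=
  (Algebra.TensorProduct.includeLeft : Cl k →ₐ[ℂ] Cl k ⊗[ℂ] H)
noncomputable def inr (k : ℕ) : H →ₐ[ℂ] T k :=
  (Algebra.TensorProduct.includeRight : H →ₐ[ℂ] Cl k ⊗[ℂ] H)

theorem inl_inr (k a b) : inr k b * inl k a = inl k a * inr k b := by
  refine (Algebra.TensorProduct.tmul_mul_tmul (R := ℂ) (1 : Cl k) a b (1 : H)).trans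
   (Eq.trans ?_ (Algebra.TensorProduct.tmul_mul_tmul (R := ℂ) a (1 : Cl k) (1 : H) b).symm)
  simp

noncomputable def tlift {k : ℕ} {B : Type*} [Ring B] [Algebra ℂ B] (f : Cl k →ₐ[ℂ] B) (g : H →ₐ[ℂ] B)
    (h : ∀ a b, Commute (f a) (g b)) : T k →ₐ[ℂ] B :=
  (Algebra.TensorProduct.lift f g h : Cl k ⊗[ℂ] H →ₐ[ℂ] B)

theorem tlift_inl {k : ℕ} {B : Type*} [Ring B] [Algebra ℂ B] (f : Cl k →ₐ[ℂ] B) (g : H →ₐ[ℂ] B)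
    (h) (a) : tlift f g h (inl k a) = f a := by
  refine (Algebra.TensorProduct.lift_tmul f g h _ _).trans ?_
  simp

theorem tlift_inr {k : ℕ} {B : Type*} [Ring B] [Algebra ℂ B] (f : Cl k →ₐ[ℂ] B) (g : H →ₐ[ℂ] B)
    (h) (a) : tlift f g h (inr k a) = g a := by
  refine (Algebra.TensorProduct.lift_tmul f g h _ _).trans ?_
  simp

theorem thom_ext {k : ℕ} {B : Type*} [Ring B] [Algebra ℂ B] {f g : T k →ₐ[ℂ] B}
   (hl : f.comp (inl k) = g.comp (inl k)) (hr : f.comp (inr k) = g.comp (inr k)) : f = g := by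
  change (f : Cl k ⊗[ℂ] H →ₐ[ℂ] B) = g
  exact Algebra.TensorProduct.ext hl (by ext <;> first | exact DFunLike.congr_fun hr _)

noncomputable def qi : H := ⟨0,1,0,0⟩
noncomputable def qj : H := ⟨0,0,1,0⟩
noncomputable def qz : H := ⟨0,0,0,Complex.I⟩
theorem qii : qi * qi = -1 := by ext <;> simp [qi]
theorem qjj : qj * qj = -1 := by ext <;> simp [qj]
theorem qji : qj * qi = -(qi * qj) := by ext <;> simp [qj, qi]
theorem qzz : qz * qz = 1 := by ext <;> simp [qz]
theorem qzi : qz * qi = -(qi * qz) := by ext <;> simp [qz, qi]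
theorem qzj : qz * qj = -(qj * qz) := by ext <;> simp [qz, qj]
theorem qz_eq : qz = Complex.I • (qi * qj) := by ext <;> simp [qz, qj, qi]

/-- The images of the tail vectors. -/
noncomputable def fD (k : ℕ) : (Fin k → ℝ) →ₗ[ℝ] T k where
  toFun w := inl k (cι k w) * inr k qz
  map_add' v w := by simp [add_mul]
  map_smul' r w := by
    have : r • cι k w = (r : ℂ) • cι k w := rfl
    rw [map_smul, this, map_smul, smul_mul_assoc]; rfl

theorem fD_apply (k w) : fD k w = inl k (cι k w) * inr k qz := rfl

theorem algMap {A B : Type*} [Ring A] [Ring B] [Algebra ℂ A] [Algebra ℂ B] (f : A →ₐ[ℂ] B) (r : ℝ) :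
    f (algebraMap ℝ A r) = algebraMap ℝ B r := f.commutes (r : ℂ)

noncomputable def fwd (k : ℕ) : Cl (k+2) →ₐ[ℂ] T k :=
  clift (ext2 (fD k) (inr k qi) (inr k qj)) <| ext2_sq _ _ _
    (by
      intro w
      rw [fD_apply, mul_assoc, ← mul_assoc (inr k qz), inl_inr, mul_assoc, ← mul_assoc,
        ← map_mul (inl k), ← map_mul (inr k), qzz, cι_sq, map_one, mul_one, algMap])
    (by rw [← map_mul, qii, map_neg, map_one])
    (by rw [← map_mul, qjj, map_neg, map_one])
    (by rw [← map_mul, qji, map_neg, map_mul])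
    (by intro w; rw [fD_apply, ← mul_assoc, inl_inr, mul_assoc, mul_assoc, ← map_mul, ← map_mul, qzi, map_neg, mul_neg])
    (by intro w; rw [fD_apply, ← mul_assoc, inl_inr, mul_assoc, mul_assoc, ← map_mul, ← map_mul, qzj, map_neg, mul_neg])

theorem fwd_cι (k v) : fwd k (cι _ v) =
    inl k (cι k (tail k v)) * inr k qz + v 0 • inr k qi + v 1 • inr k qj := clift_cι _ _ _

noncomputable def e (k : ℕ) : Cl (k+2) := cι _ (Pi.single 0 1)
noncomputable def f (k : ℕ) : Cl (k+2) := cι _ (Pi.single 1 1)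
noncomputable def D (k : ℕ) : (Fin k → ℝ) →ₗ[ℝ] Cl (k+2) := cι _ ∘ₗ incl k

theorem t0 (k) : tail k (Pi.single 0 1) = 0 := by ext; simp [tail]
theorem t1 (k) : tail k (Pi.single 1 1) = 0 := by
  ext i
  have h : (i.succ.succ : Fin (k+2)) ≠ 1 := by simp [Fin.ext_iff]
  simp [tail, h]

theorem neg_tail (k : ℕ) (v : Fin (k+2) → ℝ) :
    negDefiniteForm (k+2) v = negDefiniteForm k (tail k v) - v 0 * v 0 - v 1 * v 1 := neg_succ k v

theorem ee (k) : e k * e k = -1 := by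
  rw [e, cι_sq, neg_tail, t0]; simp
theorem ff (k) : f k * f k = -1 := by
  rw [f, cι_sq, neg_tail, t1]; simp
theorem fe (k) : f k * e k = -(e k * f k) := by
  apply cι_anti
  simp only [neg_tail, map_add, t0, t1]; simp; ring
theorem DD (k w) : D k w * D k w = algebraMap ℝ _ (negDefiniteForm k w) := by
  refine (cι_sq _ _).trans ?_
  rw [neg_tail, tail_incl, incl_zero, incl_one]; simp
theorem De (k w) : D k w * e k = -(e k * D k w) := by
  apply cι_anti
  simp only [neg_tail, map_add, t0, t1, tail_incl, Pi.add_apply, incl_zero, incl_one]; simp; ring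
theorem Df (k w) : D k w * f k = -(f k * D k w) := by
  apply cι_anti
  simp only [neg_tail, map_add, t0, t1, tail_incl, Pi.add_apply, incl_zero, incl_one]; simp; ring

theorem cι_dec (k v) : cι (k+2) v = D k (tail k v) + v 0 • e k + v 1 • f k := by
  conv_lhs => rw [decomp k v]
  simp only [map_add, map_smul]; rfl

noncomputable def z (k : ℕ) : Cl (k+2) := Complex.I • (e k * f k)

theorem efef (k) : e k * f k * (e k * f k) = -1 := by
  rw [mul_assoc, ← mul_assoc (f k), fe, neg_mul, mul_assoc, ff, mul_neg, mul_neg, mul_one, mul_neg, neg_neg, ee]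

theorem zz (k) : z k * z k = 1 := by
  simp [z, smul_smul, efef]
theorem zD (k w) : D k w * z k = z k * D k w := by
  simp only [z, mul_smul_comm, smul_mul_assoc]
  rw [← mul_assoc, De, neg_mul, mul_assoc, Df, mul_neg, neg_neg, mul_assoc]
theorem ze (k) : z k * e k = - (e k * z k) := by
  simp only [z, mul_smul_comm, smul_mul_assoc]
  rw [mul_assoc, fe, mul_neg, smul_neg]
theorem zf (k) : z k * f k = - (f k * z k) := by
  simp only [z, mul_smul_comm, smul_mul_assoc]
  rw [← mul_assoc (f k), fe, neg_mul, smul_neg, neg_neg]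

noncomputable def bD (k : ℕ) : (Fin k → ℝ) →ₗ[ℝ] Cl (k+2) := LinearMap.mulLeft ℝ (z k) ∘ₗ D k
theorem bD_apply (k w) : bD k w = z k * D k w := rfl

noncomputable def bl (k : ℕ) : Cl k →ₐ[ℂ] Cl (k+2) :=
  clift (bD k) (by
    intro w
    rw [bD_apply, mul_assoc, ← mul_assoc (D k w), zD, mul_assoc, ← mul_assoc, zz, one_mul, DD])

theorem bl_cι (k w) : bl k (cι k w) = z k * D k w := clift_cι _ _ _

noncomputable def bas (k : ℕ) : QuaternionAlgebra.Basis (Cl (k+2)) (-1 : ℂ) 0 (-1) where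
  i := e k
  j := f k
  k := e k * f k
  i_mul_i := by simp [ee]
  j_mul_j := by simp [ff]
  i_mul_j := rfl
  j_mul_i := by simp [fe]

noncomputable def br (k : ℕ) : H →ₐ[ℂ] Cl (k+2) := (bas k).liftHom
theorem br_i (k) : br k qi = e k := by simp [br, QuaternionAlgebra.Basis.lift, qi, bas]
theorem br_j (k) : br k qj = f k := by simp [br, QuaternionAlgebra.Basis.lift, qj, bas]
theorem br_z (k) : br k qz = z k := by rw [qz_eq, map_smul, map_mul, br_i, br_j, z]

theorem ce (k a) : Commute (bl k a) (e k) := by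
  have : ∀ a, bl k a * e k = e k * bl k a := by
    let c : Cl (k+2) →ₐ[ℂ] Cl (k+2) := AlgHom.ofLinearMap
      (LinearMap.mulLeft ℂ (-e k) ∘ₗ LinearMap.mulRight ℂ (e k)) (by simp [ee]) (by
        intro x y
        simp only [LinearMap.comp_apply, LinearMap.mulLeft_apply, LinearMap.mulRight_apply]
        have : e k * -e k = 1 := by simp [ee]
        calc _ = -e k * (x * 1 * y * e k) := by rw [mul_one]
          _ = _ := by rw [← this]; simp only [mul_assoc])
    have hc : c.comp (bl k) = bl k := by
      apply chom_ext
      intro w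
      change -e k * (bl k (cι k w) * e k) = _
      rw [bl_cι, mul_assoc, De, mul_neg, ← mul_assoc (z k), ze, neg_mul (e k * z k), neg_neg, mul_assoc, ← mul_assoc, neg_mul, ee, neg_neg, one_mul]
    intro a
    have := DFunLike.congr_fun hc a
    change -e k * (bl k a * e k) = _ at this
    rw [← this, ← mul_assoc (e k), mul_neg, ee, neg_neg, one_mul, this]
  exact this a

theorem cf (k a) : Commute (bl k a) (f k) := by
  have : ∀ a, bl k a * f k = f k * bl k a := by
    let c : Cl (k+2) →ₐ[ℂ] Cl (k+2) := AlgHom.ofLinearMap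
      (LinearMap.mulLeft ℂ (-f k) ∘ₗ LinearMap.mulRight ℂ (f k)) (by simp [ff]) (by
        intro x y
        simp only [LinearMap.comp_apply, LinearMap.mulLeft_apply, LinearMap.mulRight_apply]
        have : f k * -f k = 1 := by simp [ff]
        calc _ = -f k * (x * 1 * y * f k) := by rw [mul_one]
          _ = _ := by rw [← this]; simp only [mul_assoc])
    have hc : c.comp (bl k) = bl k := by
      apply chom_ext
      intro w
      change -f k * (bl k (cι k w) * f k) = _
      rw [bl_cι, mul_assoc, Df, mul_neg, ← mul_assoc (z k), zf, neg_mul (f k * z k), neg_neg, mul_assoc, ← mul_assoc, neg_mul, ff, neg_neg, one_mul]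
    intro a
    have := DFunLike.congr_fun hc a
    change -f k * (bl k a * f k) = _ at this
    rw [← this, ← mul_assoc (f k), mul_neg, ff, neg_neg, one_mul, this]
  exact this a

theorem cbr (k a b) : Commute (bl k a) (br k b) := by
  change Commute _ (algebraMap ℂ _ b.re + b.imI • e k + b.imJ • f k + b.imK • (e k * f k))
  exact (((Algebra.commute_algebraMap_right _ _).add_right ((ce k a).smul_right _)).add_right
    ((cf k a).smul_right _)).add_right (((ce k a).mul_right (cf k a)).smul_right _)

noncomputable def bwd (k : ℕ) : T k →ₐ[ℂ] Cl (k+2) := tlift (bl k) (br k) (cbr k)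

theorem rsmul {A B : Type*} [Ring A] [Ring B] [Algebra ℂ A] [Algebra ℂ B] (f : A →ₐ[ℂ] B) (r : ℝ) (x : A) :
    f (r • x) = r • f x := map_smul f (r : ℂ) x

theorem fwd_e (k) : fwd k (e k) = inr k qi := by
  rw [e, fwd_cι, t0]; simp
theorem fwd_f (k) : fwd k (f k) = inr k qj := by
  rw [f, fwd_cι, t1]; simp
theorem fwd_z (k) : fwd k (z k) = inr k qz := by
  rw [z, map_smul, map_mul, fwd_e, fwd_f, qz_eq, map_smul, map_mul]
theorem fwd_D (k w) : fwd k (D k w) = inl k (cι k w) * inr k qz := by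
  refine (fwd_cι k _).trans ?_
  rw [tail_incl, incl_zero, incl_one]; simp

theorem bwd_fwd (k) : (bwd k).comp (fwd k) = AlgHom.id ℂ _ := by
  apply chom_ext
  intro v
  simp only [AlgHom.comp_apply, AlgHom.id_apply]
  rw [fwd_cι, map_add, map_add, rsmul, rsmul, map_mul, bwd, tlift_inl, tlift_inr, tlift_inr, tlift_inr,
    br_i, br_j, br_z, bl_cι, mul_assoc, zD, ← mul_assoc, zz, one_mul, cι_dec]

theorem fwd_bwd (k) : (fwd k).comp (bwd k) = AlgHom.id ℂ _ := by
  apply thom_ext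
  · apply chom_ext
    intro w
    simp only [AlgHom.comp_apply, AlgHom.id_apply]
    rw [bwd, tlift_inl, bl_cι, map_mul, fwd_z, fwd_D, ← mul_assoc, inl_inr, mul_assoc, ← map_mul, qzz, map_one, mul_one]
  · apply QuaternionAlgebra.hom_ext
    · change fwd k (bwd k (inr k qi)) = inr k qi
      rw [bwd, tlift_inr, br_i, fwd_e]
    · change fwd k (bwd k (inr k qj)) = inr k qj
      rw [bwd, tlift_inr, br_j, fwd_f]

noncomputable def main (k : ℕ) : Cl (k+2) ≃ₐ[ℂ] T k :=
  AlgEquiv.ofAlgHom (fwd k) (bwd k) (fwd_bwd k) (bwd_fwd k)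

noncomputable def mbas : QuaternionAlgebra.Basis (Matrix (Fin 2) (Fin 2) ℂ) (-1 : ℂ) 0 (-1) where
  i := !![0, Complex.I; Complex.I, 0]
  j := !![0, 1; -1, 0]
  k := !![-Complex.I, 0; 0, Complex.I]
  i_mul_i := by ext i j; fin_cases i <;> fin_cases j <;> simp
  j_mul_j := by ext i j; fin_cases i <;> fin_cases j <;> simp
  i_mul_j := by ext i j; fin_cases i <;> fin_cases j <;> simp
  j_mul_i := by ext i j; fin_cases i <;> fin_cases j <;> simp

theorem mbas_inj : Function.Injective (mbas.liftHom) := by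
  rw [injective_iff_map_eq_zero]
  intro q h
  have h' : algebraMap ℂ _ q.re + q.imI • mbas.i + q.imJ • mbas.j + q.imK • mbas.k = 0 := h
  have h00 := congrFun (congrFun h' 0) 0
  have h01 := congrFun (congrFun h' 0) 1
  have h10 := congrFun (congrFun h' 1) 0
  have h11 := congrFun (congrFun h' 1) 1
  simp [mbas, Matrix.algebraMap_matrix_apply] at h00 h01 h10 h11
  have I2 := Complex.I_mul_I
  ext <;> simp only [QuaternionAlgebra.re_zero, QuaternionAlgebra.imI_zero, QuaternionAlgebra.imJ_zero, QuaternionAlgebra.imK_zero]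
  · linear_combination (h00 + h11) / 2
  · linear_combination (-Complex.I * (h01 + h10)) / 2 + q.imI * I2
  · linear_combination (h01 - h10) / 2
  · linear_combination (Complex.I * (h00 - h11)) / 2 + q.imK * I2

theorem mbas_bij : Function.Bijective (mbas.liftHom) := by
  refine ⟨mbas_inj, ?_⟩
  have := (LinearMap.injective_iff_surjective_of_finrank_eq_finrank (f := mbas.liftHom.toLinearMap) (by
    rw [Module.finrank_eq_card_basis (QuaternionAlgebra.basisOneIJK (-1 : ℂ) 0 (-1))]
    simp [Module.finrank_matrix])).1 mbas_inj
  exact this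

noncomputable def mEquiv : H ≃ₐ[ℂ] Matrix (Fin 2) (Fin 2) ℂ := AlgEquiv.ofBijective _ mbas_bij

noncomputable def tEquiv (k : ℕ) : T k ≃ₐ[ℂ] Cl k ⊗[ℂ] Matrix (Fin 2) (Fin 2) ℂ :=
  (Algebra.TensorProduct.congr AlgEquiv.refl mEquiv : Cl k ⊗[ℂ] H ≃ₐ[ℂ] _)

end CliffPer

/-- Atiyah–Bott–Shapiro periodicity, complex case:
`Cℓᶜ_{k+2} ≅ Cℓᶜ_k ⊗ℂ M₂(ℂ)` as ℂ-algebras. -/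
theorem complex_clifford_periodicity (k : ℕ) :
    Nonempty ((ℂ ⊗[ℝ] CliffordAlgebra (negDefiniteForm (k + 2))) ≃ₐ[ℂ]
      ((ℂ ⊗[ℝ] CliffordAlgebra (negDefiniteForm k)) ⊗[ℂ] Matrix (Fin 2) (Fin 2) ℂ)) :=
  ⟨(CliffPer.main k).trans (CliffPer.tEquiv k)⟩
end

section
/- Let Q_k denote the negative-definite quadratic form Q_k(x) = −(x₁² + ⋯ + x_k²) on ℝᵏ and Cℓ_k = CliffordAlgebra(Q_k). Then there are isomorphisms of ℝ-algebras: Cℓ₃ ≅ ℍ × ℍ, Cℓ₄ ≅ M₂(ℍ), Cℓ₅ ≅ M₄(ℂ), Cℓ₆ ≅ M₈(ℝ), and Cℓ₇ ≅ M₈(ℝ) × M₈(ℝ), where ℍ denotes the real quaternions and Mₙ(𝔽) the n×n matrices over 𝔽 regarded as ℝ-algebras. -/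
open scoped Quaternion

namespace LowClifford

/-- The filtration of an algebra by the products of the first `j` elements `g`. -/
noncomputable def filt {A : Type*} [Ring A] [Algebra ℝ A] (g : ℕ → A) : ℕ → Submodule ℝ A
  | 0 => Submodule.span ℝ {1}
  | j + 1 => filt g j ⊔ (filt g j).map (LinearMap.mulLeft ℝ (g j))

theorem filt_finite {A : Type*} [Ring A] [Algebra ℝ A] (g : ℕ → A) (j : ℕ) :
    Module.Finite ℝ (filt g j) := by
  induction j with
  | zero => exact inferInstanceAs (Module.Finite ℝ (Submodule.span ℝ {(1 : A)}))
  | succ j ih =>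
    exact inferInstanceAs (Module.Finite ℝ
      (filt g j ⊔ (filt g j).map (LinearMap.mulLeft ℝ (g j)) : Submodule ℝ A))

theorem filt_finrank {A : Type*} [Ring A] [Algebra ℝ A] (g : ℕ → A) (j : ℕ) :
    Module.finrank ℝ (filt g j) ≤ 2 ^ j := by
  induction j with
  | zero =>
    change Module.finrank ℝ (Submodule.span ℝ {(1 : A)}) ≤ _
    simpa using finrank_span_le_card (R := ℝ) ({1} : Set A)
  | succ j ih =>
    have := filt_finite g j
    change Module.finrank ℝ
      (filt g j ⊔ (filt g j).map (LinearMap.mulLeft ℝ (g j)) : Submodule ℝ A) ≤ _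
    refine (Submodule.finrank_add_le_finrank_add_finrank _ _).trans ?_
    have := Submodule.finrank_map_le (LinearMap.mulLeft ℝ (g j)) (filt g j)
    rw [pow_succ]
    omega

theorem one_mem_filt {A : Type*} [Ring A] [Algebra ℝ A] (g : ℕ → A) (j : ℕ) :
    (1 : A) ∈ filt g j := by
  induction j with
  | zero => exact Submodule.subset_span rfl
  | succ j ih => exact Submodule.mem_sup_left ih

theorem mul_mem_filt {A : Type*} [Ring A] [Algebra ℝ A] (g : ℕ → A) (k : ℕ)
    (hs : ∀ i < k, g i * g i = -1) (ha : ∀ i j, i < j → j < k → g i * g j = -(g j * g i))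
    (j : ℕ) (hj : j ≤ k) : ∀ i < j, ∀ x ∈ filt g j, g i * x ∈ filt g j := by
  induction j with
  | zero => intro i hi; omega
  | succ j ih =>
    intro i hi x hx
    obtain ⟨y, hy, z, hz, rfl⟩ := Submodule.mem_sup.1 hx
    obtain ⟨z, hz', rfl⟩ := hz
    rw [LinearMap.mulLeft_apply, mul_add]
    rcases Nat.lt_succ_iff_lt_or_eq.1 hi with h | rfl
    · refine add_mem (Submodule.mem_sup_left (ih (by omega) i h y hy)) ?_
      rw [← mul_assoc, ha i j h (by omega), neg_mul, mul_assoc]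
      exact neg_mem (Submodule.mem_sup_right ⟨_, ih (by omega) i h z hz', rfl⟩)
    · refine add_mem (Submodule.mem_sup_right ⟨_, hy, rfl⟩) ?_
      rw [← mul_assoc, hs i (by omega), neg_one_mul]
      exact neg_mem (Submodule.mem_sup_left hz')

theorem filt_eq_top {A : Type*} [Ring A] [Algebra ℝ A] (k : ℕ) (g : Fin k → A)
    (hg : ∀ i j, g i * g j + g j * g i = if i = j then -2 else 0)
    (ht : Algebra.adjoin ℝ (Set.range g) = ⊤) :
    Module.Finite ℝ A ∧ Module.finrank ℝ A ≤ 2 ^ k := by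
  let G : ℕ → A := fun i => if h : i < k then g ⟨i, h⟩ else 0
  have hG : ∀ i : Fin k, G i = g i := fun i => by simp [G]
  have hs : ∀ i < k, G i * G i = -1 := by
    intro i hi
    have h := hg ⟨i, hi⟩ ⟨i, hi⟩
    rw [if_pos rfl, ← two_smul ℝ] at h
    have h2 : (2 : ℝ) • (G i * G i) = (2 : ℝ) • (-1 : A) := by
      rw [← hG ⟨i, hi⟩] at h
      rw [h, two_smul]; norm_num
    exact smul_right_injective A (two_ne_zero (α := ℝ)) h2
  have ha : ∀ i j, i < j → j < k → G i * G j = -(G j * G i) := by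
    intro i j hij hj
    have h := hg ⟨i, by omega⟩ ⟨j, hj⟩
    rw [if_neg (by simp; omega), ← hG, ← hG] at h
    exact eq_neg_of_add_eq_zero_left h
  have hm := mul_mem_filt G k hs ha k le_rfl
  have htop : filt G k = ⊤ := by
    have key : ∀ x ∈ Algebra.adjoin ℝ (Set.range g), ∀ y ∈ filt G k, x * y ∈ filt G k := by
      intro x hx
      induction hx using Algebra.adjoin_induction with
      | mem x hx =>
        obtain ⟨i, rfl⟩ := hx
        intro y hy
        rw [← hG]
        exact hm i i.2 y hy
      | algebraMap r =>
        intro y hy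
        rw [← Algebra.smul_def]
        exact Submodule.smul_mem _ _ hy
      | add a b _ _ h1 h2 => intro y hy; rw [add_mul]; exact add_mem (h1 y hy) (h2 y hy)
      | mul a b _ _ h1 h2 => intro y hy; rw [mul_assoc]; exact h1 _ (h2 y hy)
    rw [eq_top_iff]
    intro x _
    simpa using key x (by rw [ht]; trivial) 1 (one_mem_filt G k)
  have hf := filt_finite G k
  have hr := filt_finrank G k
  rw [htop] at hf hr
  exact ⟨Module.Finite.equiv Submodule.topEquiv, by rwa [finrank_top] at hr⟩

theorem linComb_sq {A : Type*} [Ring A] [Algebra ℝ A] (k : ℕ) (g : Fin k → A)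
    (hg : ∀ i j, g i * g j + g j * g i = if i = j then -2 else 0) (v : Fin k → ℝ) :
    Fintype.linearCombination ℝ g v * Fintype.linearCombination ℝ g v
      = algebraMap ℝ A (negDefiniteForm k v) := by
  have h1 : Fintype.linearCombination ℝ g v * Fintype.linearCombination ℝ g v
      = ∑ i, ∑ j, (v i * v j) • (g i * g j) := by
    simp only [Fintype.linearCombination_apply, Finset.sum_mul_sum, smul_mul_smul_comm]
  have h2 : Fintype.linearCombination ℝ g v * Fintype.linearCombination ℝ g v
      = ∑ i, ∑ j, (v i * v j) • (g j * g i) := by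
    rw [h1, Finset.sum_comm]
    simp only [mul_comm]
  have h3 : (2 : ℝ) • (Fintype.linearCombination ℝ g v * Fintype.linearCombination ℝ g v)
      = (2 : ℝ) • algebraMap ℝ A (negDefiniteForm k v) := by
    rw [two_smul]
    nth_rewrite 1 [h1]
    rw [h2]
    simp only [← Finset.sum_add_distrib, ← smul_add, hg, smul_ite, smul_zero,
      Finset.sum_ite_eq, Finset.mem_univ, if_true]
    rw [negDefiniteForm, QuadraticMap.weightedSumSquares_apply, Algebra.algebraMap_eq_smul_one,
      smul_smul, Finset.mul_sum, Finset.sum_smul]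
    refine Finset.sum_congr rfl fun i _ => ?_
    have : (-2 : A) = (-2 : ℝ) • (1 : A) := by
      rw [neg_smul, two_smul]; norm_num
    rw [this, smul_smul]
    congr 1
    simp
    ring
  exact smul_right_injective A (two_ne_zero (α := ℝ)) h3

theorem cliff_equiv {A : Type*} [Ring A] [Algebra ℝ A] (k : ℕ) (g : Fin k → A)
    (hg : ∀ i j, g i * g j + g j * g i = if i = j then -2 else 0)
    (ht : Algebra.adjoin ℝ (Set.range g) = ⊤) (hd : Module.finrank ℝ A = 2 ^ k) :
    Nonempty (CliffordAlgebra (negDefiniteForm k) ≃ₐ[ℝ] A) := by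
  let F : CliffordAlgebra (negDefiniteForm k) →ₐ[ℝ] A :=
    CliffordAlgebra.lift _ ⟨Fintype.linearCombination ℝ g, linComb_sq k g hg⟩
  let e : Fin k → CliffordAlgebra (negDefiniteForm k) :=
    fun i => CliffordAlgebra.ι _ (Pi.single i 1)
  have hFe : ∀ i, F (e i) = g i := by
    intro i
    simp [F, e]
  have hsurj : Function.Surjective F := by
    rw [← AlgHom.range_eq_top, eq_top_iff, ← ht, Algebra.adjoin_le_iff]
    rintro _ ⟨i, rfl⟩
    exact ⟨e i, hFe i⟩
  have he : ∀ i j, e i * e j + e j * e i = if i = j then -2 else 0 := by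
    intro i j
    simp only [e]
    rw [CliffordAlgebra.ι_mul_ι_add_swap]
    have : QuadraticMap.polar (negDefiniteForm k) (Pi.single i 1) (Pi.single j 1)
        = if i = j then (-2 : ℝ) else 0 := by
      simp only [QuadraticMap.polar, negDefiniteForm, QuadraticMap.weightedSumSquares_apply,
        ← Finset.sum_sub_distrib, Pi.add_apply]
      have : ∀ x : Fin k, (-1 : ℝ) • (((Pi.single i 1 : Fin k → ℝ) x
          + (Pi.single j 1 : Fin k → ℝ) x) * ((Pi.single i 1 : Fin k → ℝ) x
          + (Pi.single j 1 : Fin k → ℝ) x))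
          - (-1 : ℝ) • ((Pi.single i 1 : Fin k → ℝ) x * (Pi.single i 1 : Fin k → ℝ) x)
          - (-1 : ℝ) • ((Pi.single j 1 : Fin k → ℝ) x * (Pi.single j 1 : Fin k → ℝ) x)
          = if x = i then (if i = j then (-2 : ℝ) else 0) else 0 := by
        intro x
        simp only [Pi.single_apply, smul_eq_mul]
        split_ifs <;> simp_all <;> norm_num
      rw [Finset.sum_congr rfl fun x _ => this x]
      simp
    rw [this]
    split_ifs
    · simp [map_ofNat]
    · simp
  have het : Algebra.adjoin ℝ (Set.range e) = ⊤ := by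
    rw [eq_top_iff, ← CliffordAlgebra.adjoin_range_ι, Algebra.adjoin_le_iff]
    rintro _ ⟨v, rfl⟩
    have : v = ∑ i, v i • (Pi.single i 1 : Fin k → ℝ) := by
      ext j; simp [Finset.sum_apply, Pi.single_apply]
    rw [this, map_sum]
    refine sum_mem fun i _ => ?_
    rw [map_smul]
    have hi : e i ∈ Algebra.adjoin ℝ (Set.range e) := Algebra.subset_adjoin ⟨i, rfl⟩
    exact Subalgebra.smul_mem _ hi _
  obtain ⟨hfin, hle⟩ := filt_eq_top k e he het
  have hge : Module.finrank ℝ A ≤ Module.finrank ℝ (CliffordAlgebra (negDefiniteForm k)) :=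
    LinearMap.finrank_le_finrank_of_surjective (f := F.toLinearMap) hsurj
  have hfinA : Module.Finite ℝ A := Module.Finite.of_surjective F.toLinearMap hsurj
  have hinj : Function.Injective F := by
    have := (LinearMap.injective_iff_surjective_of_finrank_eq_finrank
      (f := F.toLinearMap) (by omega)).2 hsurj
    exact this
  exact ⟨AlgEquiv.ofBijective F ⟨hinj, hsurj⟩⟩

/-- Doubling. -/
theorem double_top {A : Type*} [Ring A] [Algebra ℝ A] (k : ℕ) (g : Fin k → A) (w : A)
    (ht : Algebra.adjoin ℝ (Set.range g) = ⊤) (hw : w * w = -1) :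
    Algebra.adjoin ℝ (Set.range (Fin.snoc (fun i => (g i, g i)) (w, -w) : Fin (k + 1) → A × A))
      = ⊤ := by
  set S := Algebra.adjoin ℝ
    (Set.range (Fin.snoc (fun i => (g i, g i)) (w, -w) : Fin (k + 1) → A × A)) with hS
  have hdiag : ∀ a : A, (a, a) ∈ S := by
    have : Algebra.adjoin ℝ (Set.range g) ≤ S.comap ((AlgHom.id ℝ A).prod (AlgHom.id ℝ A)) := by
      rw [Algebra.adjoin_le_iff]
      rintro _ ⟨i, rfl⟩
      exact Algebra.subset_adjoin ⟨i.castSucc, by simp⟩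
    rw [ht] at this
    intro a
    exact this (x := a) trivial
  have hww : (w, -w) ∈ S := Algebra.subset_adjoin ⟨Fin.last k, by simp⟩
  have h1 : ((-1 : A), (1 : A)) ∈ S := by
    have := mul_mem (hdiag w) hww
    simpa [hw] using this
  rw [eq_top_iff]
  rintro ⟨a, b⟩ -
  have : (a, b) = ((2 : ℝ)⁻¹ • (a + b), (2 : ℝ)⁻¹ • (a + b))
      + ((2 : ℝ)⁻¹ • (b - a), (2 : ℝ)⁻¹ • (b - a)) * ((-1 : A), (1 : A)) := by
    ext
    · simp only [Prod.mk_mul_mk, Prod.mk_add_mk]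
      rw [mul_neg_one]; module
    · simp only [Prod.mk_mul_mk, Prod.mk_add_mk]
      rw [mul_one]; module
  rw [this]
  exact add_mem (hdiag _) (mul_mem (hdiag _) h1)

theorem double_rel {A : Type*} [Ring A] [Algebra ℝ A] (k : ℕ) (g : Fin k → A) (w : A)
    (hg : ∀ i j, g i * g j + g j * g i = if i = j then -2 else 0)
    (hw : w * w = -1) (hgw : ∀ i, g i * w + w * g i = 0) :
    let G := (Fin.snoc (fun i => (g i, g i)) (w, -w) : Fin (k + 1) → A × A)
    ∀ i j, G i * G j + G j * G i = if i = j then -2 else 0 := by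
  intro G i j
  have hn : (-1 : A) + -1 = -2 := by norm_num
  induction i using Fin.lastCases with
  | last =>
    induction j using Fin.lastCases with
    | last => ext <;> simp [G, hw, hn]
    | cast j =>
      have h := hgw j
      rw [add_comm] at h
      rw [if_neg (Fin.castSucc_lt_last j).ne']
      ext
      · simp [G, h]
      · simp [G, ← neg_add, h]
  | cast i =>
    induction j using Fin.lastCases with
    | last =>
      have h := hgw i
      rw [if_neg (Fin.castSucc_lt_last i).ne]
      ext
      · simp [G, h]
      · simp [G, ← neg_add, h]
    | cast j =>
      have h := hg i j
      simp only [G, Fin.snoc_castSucc, Fin.castSucc_inj, Prod.mk_mul_mk, Prod.mk_add_mk, h]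
      split_ifs <;> rfl

theorem matrix_top {n : Type*} [Fintype n] [DecidableEq n] {A : Type*} [Ring A] [Algebra ℝ A]
    (S : Subalgebra ℝ (Matrix n n A)) (hE : ∀ i j, Matrix.single i j (1 : A) ∈ S)
    (X : Set A) (hX : Algebra.adjoin ℝ X = ⊤) (hs : ∀ a ∈ X, Matrix.scalar n a ∈ S) : S = ⊤ := by
  have hall : ∀ a : A, Matrix.scalar n a ∈ S := by
    intro a
    have ha : a ∈ Algebra.adjoin ℝ X := by rw [hX]; trivial
    induction ha using Algebra.adjoin_induction with
    | mem x hx => exact hs x hx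
    | algebraMap r => exact S.algebraMap_mem r
    | add a b _ _ h1 h2 => rw [map_add]; exact add_mem h1 h2
    | mul a b _ _ h1 h2 => rw [map_mul]; exact mul_mem h1 h2
  rw [eq_top_iff]
  intro M _
  rw [Matrix.matrix_eq_sum_single M]
  refine sum_mem fun i _ => sum_mem fun j _ => ?_
  have : Matrix.single i j (M i j) = Matrix.single i j (1 : A) * Matrix.scalar n (M i j) := by
    refine Matrix.ext fun a b => ?_
    rw [Matrix.scalar_apply, Matrix.mul_diagonal]
    simp [Matrix.single_apply]
  rw [this]
  exact mul_mem (hE i j) (hall _)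

/-- The quaternion `i`. -/
def qI : ℍ[ℝ] := ⟨0, 1, 0, 0⟩
/-- The quaternion `j`. -/
def qJ : ℍ[ℝ] := ⟨0, 0, 1, 0⟩
/-- The quaternion `k`. -/
def qK : ℍ[ℝ] := ⟨0, 0, 0, 1⟩

theorem qI_comp : qI.re = 0 ∧ qI.imI = 1 ∧ qI.imJ = 0 ∧ qI.imK = 0 := ⟨rfl, rfl, rfl, rfl⟩
theorem qJ_comp : qJ.re = 0 ∧ qJ.imI = 0 ∧ qJ.imJ = 1 ∧ qJ.imK = 0 := ⟨rfl, rfl, rfl, rfl⟩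
theorem qK_comp : qK.re = 0 ∧ qK.imI = 0 ∧ qK.imJ = 0 ∧ qK.imK = 1 := ⟨rfl, rfl, rfl, rfl⟩

theorem quat_table : (qI * qI = -1 ∧ qJ * qJ = -1 ∧ qK * qK = -1) ∧
    (qI * qJ = qK ∧ qJ * qI = -qK) ∧ (qJ * qK = qI ∧ qK * qJ = -qI) ∧
    (qK * qI = qJ ∧ qI * qK = -qJ) := by
  refine ⟨⟨?_, ?_, ?_⟩, ⟨?_, ?_⟩, ⟨?_, ?_⟩, ⟨?_, ?_⟩⟩ <;>
    apply Quaternion.ext <;>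
    simp [qI_comp, qJ_comp, qK_comp]

theorem quat_top : Algebra.adjoin ℝ (Set.range ![qI, qJ]) = ⊤ := by
  set S := Algebra.adjoin ℝ (Set.range ![qI, qJ])
  have hi : qI ∈ S := Algebra.subset_adjoin ⟨0, rfl⟩
  have hj : qJ ∈ S := Algebra.subset_adjoin ⟨1, rfl⟩
  rw [eq_top_iff]
  intro q _
  have : q = algebraMap ℝ ℍ[ℝ] q.re + q.imI • qI + q.imJ • qJ + q.imK • (qI * qJ) := by
    rw [quat_table.2.1.1]
    apply Quaternion.ext <;> simp [qI_comp, qJ_comp, qK_comp, Quaternion.algebraMap_def]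
  rw [this]
  exact add_mem (add_mem (add_mem (S.algebraMap_mem _) (S.smul_mem hi _)) (S.smul_mem hj _))
    (S.smul_mem (mul_mem hi hj) _)

theorem cliff3 : Nonempty (CliffordAlgebra (negDefiniteForm 3) ≃ₐ[ℝ] (ℍ[ℝ] × ℍ[ℝ])) := by
  obtain ⟨⟨hii, hjj, hkk⟩, ⟨hij, hji⟩, ⟨hjk, hkj⟩, hki, hik⟩ := quat_table
  have hn : (-1 : ℍ[ℝ]) + -1 = -2 := by norm_num
  refine cliff_equiv 3 _ (double_rel 2 _ qK ?_ hkk ?_) (double_top 2 _ _ quat_top hkk) ?_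
  · intro i j
    fin_cases i <;> fin_cases j <;> simp [hii, hjj, hij, hji, hn]
  · intro i
    fin_cases i <;> simp [hik, hki, hjk, hkj]
  · simp [Module.finrank_prod, Quaternion.finrank_eq_four]

theorem cliff4 :
    Nonempty (CliffordAlgebra (negDefiniteForm 4) ≃ₐ[ℝ] Matrix (Fin 2) (Fin 2) ℍ[ℝ]) := by
  obtain ⟨i, j, k, ⟨hii, hjj, hkk⟩, ⟨hij, hji⟩, ⟨hjk, hkj⟩, ⟨hki, hik⟩, hq⟩ :
      ∃ i j k : ℍ[ℝ], (i * i = -1 ∧ j * j = -1 ∧ k * k = -1) ∧ (i * j = k ∧ j * i = -k) ∧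
        (j * k = i ∧ k * j = -i) ∧ (k * i = j ∧ i * k = -j) ∧
        Algebra.adjoin ℝ (Set.range ![i, j]) = ⊤ :=
    ⟨qI, qJ, qK, quat_table.1, quat_table.2.1, quat_table.2.2.1, quat_table.2.2.2, quat_top⟩
  have hn : (-1 : ℍ[ℝ]) + -1 = -2 := by norm_num
  have m2 : (-2 : Matrix (Fin 2) (Fin 2) ℍ[ℝ]) = !![-2, 0; 0, -2] := by
    rw [← Matrix.diagonal_ofNat' (n := Fin 2) (α := ℍ[ℝ]), Matrix.diagonal_neg]
    refine Matrix.ext fun a b => ?_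
    fin_cases a <;> fin_cases b <;> simp
  let g : Fin 4 → Matrix (Fin 2) (Fin 2) ℍ[ℝ] :=
    ![!![i, 0; 0, -i], !![j, 0; 0, -j], !![k, 0; 0, -k], !![0, 1; -1, 0]]
  refine cliff_equiv 4 g ?_ ?_ ?_
  · intro a b
    fin_cases a <;> fin_cases b <;>
      simp [g, Matrix.mul_fin_two, hii, hjj, hkk, hij, hji, hjk, hkj, hki, hik, m2, hn,
        ← Matrix.ext_iff, Fin.forall_fin_two]
  · set S := Algebra.adjoin ℝ (Set.range g)
    have h0 : !![i, 0; 0, -i] ∈ S := Algebra.subset_adjoin ⟨0, rfl⟩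
    have h1 : !![j, 0; 0, -j] ∈ S := Algebra.subset_adjoin ⟨1, rfl⟩
    have h2 : !![k, 0; 0, -k] ∈ S := Algebra.subset_adjoin ⟨2, rfl⟩
    have h3 : !![0, 1; -1, 0] ∈ S := Algebra.subset_adjoin ⟨3, rfl⟩
    have hz : !![-1, 0; 0, 1] ∈ S := by
      have := mul_mem (mul_mem h0 h1) h2
      simpa [Matrix.mul_fin_two, hij, hkk] using this
    have hE0 : Matrix.single 0 0 (1 : ℍ[ℝ]) ∈ S := by
      have : Matrix.single (0 : Fin 2) (0 : Fin 2) (1 : ℍ[ℝ])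
          = (2 : ℝ)⁻¹ • (1 - !![-1, 0; 0, 1]) := by
        refine Matrix.ext fun a b => ?_
        have h2 : (1 : ℍ[ℝ]) = (2 : ℝ)⁻¹ • (1 + 1) := by module
        fin_cases a <;> fin_cases b <;> simp
        simpa using h2
      rw [this]
      exact S.smul_mem (sub_mem (one_mem _) hz) _
    have hE1 : Matrix.single 1 1 (1 : ℍ[ℝ]) ∈ S := by
      have : Matrix.single (1 : Fin 2) (1 : Fin 2) (1 : ℍ[ℝ])
          = 1 - Matrix.single 0 0 1 := by
        refine Matrix.ext fun a b => ?_
        fin_cases a <;> fin_cases b <;> simp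
      rw [this]
      exact sub_mem (one_mem _) hE0
    refine matrix_top S ?_ _ hq ?_
    · intro a b
      fin_cases a <;> fin_cases b
      · exact hE0
      · have := mul_mem hE0 h3
        convert this using 1
        refine Matrix.ext fun a b => ?_
        fin_cases a <;> fin_cases b <;> simp [Matrix.mul_apply, Matrix.single_apply]
      · have := neg_mem (mul_mem hE1 h3)
        convert this using 1
        refine Matrix.ext fun a b => ?_
        fin_cases a <;> fin_cases b <;> simp [Matrix.mul_apply, Matrix.single_apply]
      · exact hE1
    · rintro _ ⟨a, rfl⟩
      fin_cases a
      · have := neg_mem (mul_mem h0 hz)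
        convert this using 1
        refine Matrix.ext fun a b => ?_
        fin_cases a <;> fin_cases b <;> simp
      · have := neg_mem (mul_mem h1 hz)
        convert this using 1
        refine Matrix.ext fun a b => ?_
        fin_cases a <;> fin_cases b <;> simp
  · simp [Module.finrank_matrix, Quaternion.finrank_eq_four]

/-- The matrix of a real Pauli string: `X ^ a * Z ^ b` -/
def pauli (n a b : ℕ) : Matrix (Fin n) (Fin n) ℤ := Matrix.of fun x y =>
  if x.val = y.val ^^^ a then
    (if (b &&& y.val) = 0 ∨ (b &&& y.val) = 3 ∨ (b &&& y.val) = 5 ∨ (b &&& y.val) = 6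
      then 1 else -1) else 0

def gam8 : Fin 6 → Matrix (Fin 8) (Fin 8) ℤ :=
  ![pauli 8 1 3, pauli 8 2 6, pauli 8 3 1, pauli 8 4 5, pauli 8 5 4, pauli 8 6 2]

theorem gam8_rel : ∀ i j, gam8 i * gam8 j + gam8 j * gam8 i = if i = j then -2 else 0 := by
  decide +kernel
theorem gam8_w : (∀ i, gam8 i * pauli 8 7 7 + pauli 8 7 7 * gam8 i = 0) ∧
    pauli 8 7 7 * pauli 8 7 7 = -1 := by
  decide +kernel
theorem gam8_words :
    gam8 1 * gam8 4 * gam8 5 = pauli 8 1 0 ∧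
    gam8 2 * gam8 3 * gam8 4 = -pauli 8 2 0 ∧
    gam8 0 * gam8 2 * gam8 5 = -pauli 8 4 0 ∧
    gam8 1 * gam8 3 * gam8 5 = pauli 8 0 1 ∧
    gam8 0 * gam8 3 * gam8 4 = -pauli 8 0 2 ∧
    gam8 0 * gam8 1 * gam8 2 = pauli 8 0 4 := by
  decide +kernel
theorem units8 :
    (1 + pauli 8 0 1) * (1 + pauli 8 0 2) * (1 + pauli 8 0 4) = Matrix.single 0 0 8 ∧
    pauli 8 1 0 * pauli 8 2 0 = pauli 8 3 0 ∧
    pauli 8 1 0 * pauli 8 4 0 = pauli 8 5 0 ∧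
    pauli 8 2 0 * pauli 8 4 0 = pauli 8 6 0 ∧
    pauli 8 3 0 * pauli 8 4 0 = pauli 8 7 0 ∧ pauli 8 0 0 = 1 := by
  decide +kernel
theorem units8' : ∀ i j : Fin 8, pauli 8 i.val 0 * Matrix.single 0 0 8 * pauli 8 j.val 0 = Matrix.single i j 8 := by
  decide +kernel

theorem gam8_units (S : Subring (Matrix (Fin 8) (Fin 8) ℤ)) (h : ∀ i, gam8 i ∈ S) (i j : Fin 8) :
    Matrix.single i j 8 ∈ S := by
  obtain ⟨w1, w2, w3, w4, w5, w6⟩ := gam8_words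
  obtain ⟨u0, u1, u2, u3, u4, u5⟩ := units8
  have x1 : pauli 8 1 0 ∈ S := w1 ▸ mul_mem (mul_mem (h _) (h _)) (h _)
  have x2 : pauli 8 2 0 ∈ S := neg_mem_iff.1 (w2 ▸ mul_mem (mul_mem (h _) (h _)) (h _))
  have x4 : pauli 8 4 0 ∈ S := neg_mem_iff.1 (w3 ▸ mul_mem (mul_mem (h _) (h _)) (h _))
  have z1 : pauli 8 0 1 ∈ S := w4 ▸ mul_mem (mul_mem (h _) (h _)) (h _)
  have z2 : pauli 8 0 2 ∈ S := neg_mem_iff.1 (w5 ▸ mul_mem (mul_mem (h _) (h _)) (h _))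
  have z4 : pauli 8 0 4 ∈ S := w6 ▸ mul_mem (mul_mem (h _) (h _)) (h _)
  have x3 : pauli 8 3 0 ∈ S := u1 ▸ mul_mem x1 x2
  have hx : ∀ i : Fin 8, pauli 8 i.val 0 ∈ S := by
    intro i
    fin_cases i
    · exact u5 ▸ one_mem S
    · exact x1
    · exact x2
    · exact x3
    · exact x4
    · exact u2 ▸ mul_mem x1 x4
    · exact u3 ▸ mul_mem x2 x4
    · exact u4 ▸ mul_mem x3 x4
  have h0 : Matrix.single 0 0 8 ∈ S := by
    rw [← u0]
    exact mul_mem (mul_mem (add_mem (one_mem S) z1) (add_mem (one_mem S) z2))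
      (add_mem (one_mem S) z4)
  rw [← units8']
  exact mul_mem (mul_mem (hx i) h0) (hx j)

/-- Integer matrices, mapped to matrices over a real algebra. -/
def castM (n : ℕ) (A : Type*) [Ring A] : Matrix (Fin n) (Fin n) ℤ →+* Matrix (Fin n) (Fin n) A :=
  (Int.castRingHom A).mapMatrix

theorem castM_units {n : ℕ} {A : Type*} [Ring A] [Algebra ℝ A]
    (S : Subalgebra ℝ (Matrix (Fin n) (Fin n) A)) (m : ℤ) (hm : m ≠ 0) (i j : Fin n)
    (h : castM n A (Matrix.single i j m) ∈ S) : Matrix.single i j (1 : A) ∈ S := by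
  have : Matrix.single i j (1 : A) = (m : ℝ)⁻¹ • castM n A (Matrix.single i j m) := by
    have h1 : (m : A) = (m : ℝ) • (1 : A) := by
      rw [← Algebra.algebraMap_eq_smul_one, map_intCast]
    have h2 : (m : ℝ) ≠ 0 := by exact_mod_cast hm
    refine Matrix.ext fun a b => ?_
    simp only [castM, RingHom.mapMatrix_apply, Matrix.smul_apply, Matrix.map_apply,
      Matrix.single_apply]
    split_ifs
    · rw [eq_intCast, h1, smul_smul, inv_mul_cancel₀ h2, one_smul]
    · simp
  rw [this]
  exact S.smul_mem h _

theorem real8_rel (i j : Fin 6) : castM 8 ℝ (gam8 i) * castM 8 ℝ (gam8 j)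
    + castM 8 ℝ (gam8 j) * castM 8 ℝ (gam8 i) = if i = j then -2 else 0 := by
  rw [← map_mul, ← map_mul, ← map_add, gam8_rel]
  split_ifs
  · rw [map_neg, map_ofNat]
  · rw [map_zero]

theorem real8_top : Algebra.adjoin ℝ (Set.range fun i => castM 8 ℝ (gam8 i)) = ⊤ := by
  set S := Algebra.adjoin ℝ (Set.range fun i => castM 8 ℝ (gam8 i))
  refine matrix_top S (fun i j => castM_units S 8 (by norm_num) i j ?_) ∅
    (Subsingleton.elim _ _) (by simp)
  exact gam8_units (S.toSubring.comap (castM 8 ℝ))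
    (fun i => (Algebra.subset_adjoin ⟨i, rfl⟩ : castM 8 ℝ (gam8 i) ∈ S)) i j

theorem cliff6 :
    Nonempty (CliffordAlgebra (negDefiniteForm 6) ≃ₐ[ℝ] Matrix (Fin 8) (Fin 8) ℝ) :=
  cliff_equiv 6 _ real8_rel real8_top (by simp [Module.finrank_matrix])

theorem cliff7 :
    Nonempty (CliffordAlgebra (negDefiniteForm 7) ≃ₐ[ℝ]
      (Matrix (Fin 8) (Fin 8) ℝ × Matrix (Fin 8) (Fin 8) ℝ)) := by
  have hw : castM 8 ℝ (pauli 8 7 7) * castM 8 ℝ (pauli 8 7 7) = -1 := by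
    rw [← map_mul, gam8_w.2, map_neg, map_one]
  refine cliff_equiv 7 _ (double_rel 6 _ _ real8_rel hw fun i => ?_)
    (double_top 6 _ _ real8_top hw) ?_
  · rw [← map_mul, ← map_mul, ← map_add, gam8_w.1, map_zero]
  · simp [Module.finrank_prod, Module.finrank_matrix]

/-- The five real matrices underlying the generators of `Cℓ₅`. -/
def gam4 : Fin 5 → Matrix (Fin 4) (Fin 4) ℤ :=
  ![pauli 4 1 3, pauli 4 3 1, pauli 4 0 1, pauli 4 1 0, pauli 4 3 3]

/-- The signs of the squares of `gam4`. -/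
def sgn4 : Fin 5 → ℤ := ![-1, -1, 1, 1, 1]

theorem gam4_rel : ∀ i j, gam4 i * gam4 j + gam4 j * gam4 i
    = if i = j then sgn4 i • 2 else 0 := by
  decide +kernel

theorem gam4_prod : gam4 0 * gam4 1 * gam4 2 * gam4 3 * gam4 4 = 1 ∨
    gam4 0 * gam4 1 * gam4 2 * gam4 3 * gam4 4 = -1 := by
  decide +kernel

theorem gam4_words : gam4 0 * gam4 4 = pauli 4 2 0 ∧ gam4 1 * gam4 4 = -pauli 4 0 2 := by
  decide +kernel

theorem units4 :
    (1 + pauli 4 0 1) * (1 + pauli 4 0 2) = Matrix.single 0 0 4 ∧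
    pauli 4 1 0 * pauli 4 2 0 = pauli 4 3 0 ∧ pauli 4 0 0 = 1 := by
  decide +kernel

theorem units4' : ∀ i j : Fin 4,
    pauli 4 i.val 0 * Matrix.single 0 0 4 * pauli 4 j.val 0 = Matrix.single i j 4 := by
  decide +kernel

theorem gam4_units (S : Subring (Matrix (Fin 4) (Fin 4) ℤ)) (h : ∀ i, gam4 i ∈ S) (i j : Fin 4) :
    Matrix.single i j 4 ∈ S := by
  obtain ⟨w1, w2⟩ := gam4_words
  obtain ⟨u0, u1, u2⟩ := units4
  have x1 : pauli 4 1 0 ∈ S := h 3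
  have x2 : pauli 4 2 0 ∈ S := w1 ▸ mul_mem (h _) (h _)
  have z1 : pauli 4 0 1 ∈ S := h 2
  have z2 : pauli 4 0 2 ∈ S := neg_mem_iff.1 (w2 ▸ mul_mem (h _) (h _))
  have hx : ∀ i : Fin 4, pauli 4 i.val 0 ∈ S := by
    intro i
    fin_cases i
    · exact u2 ▸ one_mem S
    · exact x1
    · exact x2
    · exact u1 ▸ mul_mem x1 x2
  have h0 : Matrix.single 0 0 4 ∈ S := by
    rw [← u0]
    exact mul_mem (add_mem (one_mem S) z1) (add_mem (one_mem S) z2)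
  rw [← units4']
  exact mul_mem (mul_mem (hx i) h0) (hx j)

/-- The phases turning `gam4` into generators of `Cℓ₅`. -/
noncomputable def ph4 : Fin 5 → ℂ := ![1, 1, Complex.I, Complex.I, Complex.I]

theorem ph4_sq (i : Fin 5) : ph4 i * ph4 i * (sgn4 i : ℂ) = -1 := by
  fin_cases i <;> simp [ph4, sgn4]

theorem cliff5 :
    Nonempty (CliffordAlgebra (negDefiniteForm 5) ≃ₐ[ℝ] Matrix (Fin 4) (Fin 4) ℂ) := by
  let g : Fin 5 → Matrix (Fin 4) (Fin 4) ℂ := fun i => ph4 i • castM 4 ℂ (gam4 i)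
  refine cliff_equiv 5 g ?_ ?_ ?_
  · intro i j
    have h : castM 4 ℂ (gam4 i) * castM 4 ℂ (gam4 j) + castM 4 ℂ (gam4 j) * castM 4 ℂ (gam4 i)
        = if i = j then (sgn4 i : ℂ) • 2 else 0 := by
      rw [← map_mul, ← map_mul, ← map_add, gam4_rel]
      split_ifs
      · rw [map_zsmul, map_ofNat, Int.cast_smul_eq_zsmul]
      · rw [map_zero]
    simp only [g, smul_mul_smul_comm]
    rw [mul_comm (ph4 j), ← smul_add, h]
    split_ifs with hij
    · subst hij
      rw [smul_smul, ph4_sq, neg_one_smul]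
    · rw [smul_zero]
  · set S := Algebra.adjoin ℝ (Set.range g)
    have hg : ∀ i, g i ∈ S := fun i => Algebra.subset_adjoin ⟨i, rfl⟩
    have hI : Complex.I • (1 : Matrix (Fin 4) (Fin 4) ℂ) ∈ S := by
      have hp : g 0 * g 1 * g 2 * g 3 * g 4 ∈ S :=
        mul_mem (mul_mem (mul_mem (mul_mem (hg _) (hg _)) (hg _)) (hg _)) (hg _)
      have hc : ph4 0 * ph4 1 * ph4 2 * ph4 3 * ph4 4 = -Complex.I := by
        simp [ph4]
      simp only [g, smul_mul_smul_comm, ← map_mul] at hp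
      rw [hc] at hp
      rcases gam4_prod with h | h <;> rw [h] at hp
      · simpa using hp
      · simpa using hp
    have hr : ∀ i, castM 4 ℂ (gam4 i) ∈ S := by
      intro i
      have h0 := hg i
      have h1 := neg_mem (mul_mem hI (hg i))
      simp only [g, smul_mul_smul_comm, one_mul] at h0 h1
      fin_cases i
      · simpa [ph4] using h0
      · simpa [ph4] using h0
      · simpa [ph4] using h1
      · simpa [ph4] using h1
      · simpa [ph4] using h1
    refine matrix_top S (fun i j => castM_units S 4 (by norm_num) i j ?_) {Complex.I}
      Complex.adjoin_I ?_
    · exact gam4_units (S.toSubring.comap (castM 4 ℂ)) hr i j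
    · rintro _ rfl
      rw [Matrix.scalar_apply, ← Matrix.smul_one_eq_diagonal]
      exact hI
  · simp [Module.finrank_matrix, Complex.finrank_real_complex]

end LowClifford

/-- classification of low-dimensional real Clifford algebras:
`Cℓ₃ ≅ ℍ × ℍ`, `Cℓ₄ ≅ M₂(ℍ)`, `Cℓ₅ ≅ M₄(ℂ)`, `Cℓ₆ ≅ M₈(ℝ)`, and
`Cℓ₇ ≅ M₈(ℝ) × M₈(ℝ)` as ℝ-algebras. -/
theorem low_dimensional_real_clifford_algebras :
    Nonempty (CliffordAlgebra (negDefiniteForm 3) ≃ₐ[ℝ] (ℍ[ℝ] × ℍ[ℝ])) ∧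
    Nonempty (CliffordAlgebra (negDefiniteForm 4) ≃ₐ[ℝ] Matrix (Fin 2) (Fin 2) ℍ[ℝ]) ∧
    Nonempty (CliffordAlgebra (negDefiniteForm 5) ≃ₐ[ℝ] Matrix (Fin 4) (Fin 4) ℂ) ∧
    Nonempty (CliffordAlgebra (negDefiniteForm 6) ≃ₐ[ℝ] Matrix (Fin 8) (Fin 8) ℝ) ∧
    Nonempty (CliffordAlgebra (negDefiniteForm 7) ≃ₐ[ℝ]
      (Matrix (Fin 8) (Fin 8) ℝ × Matrix (Fin 8) (Fin 8) ℝ)) := by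
  exact ⟨LowClifford.cliff3, LowClifford.cliff4, LowClifford.cliff5, LowClifford.cliff6,
    LowClifford.cliff7⟩
end

section
/- The mapping cone of the inclusion ℝ ↪ ℂ, namely the real ⋆-algebra Cc = {f ∈ C([0,1], ℂ) : f(0) ∈ ℝ and f(1) = 0} with pointwise operations and pointwise complex conjugation as star, is isomorphic as a real ⋆-algebra to C₀^ℝ(iℝ) = {f ∈ C₀(ℝ, ℂ) : f(−x) = conj(f(x)) for all x ∈ ℝ}. -/
open scoped ZeroAtInfty ComplexConjugate

set_option synthInstance.maxHeartbeats 1000000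

/-- The mapping cone of the inclusion `ℝ ↪ ℂ`:
`Cc = {f ∈ C([0,1], ℂ) : f(0) ∈ ℝ, f(1) = 0}`, as a non-unital real ⋆-subalgebra of
`C([0,1], ℂ)` (with pointwise complex conjugation as star). -/
noncomputable def mappingConeRealComplex : NonUnitalStarSubalgebra ℝ C(unitInterval, ℂ) where
  carrier := {f : C(unitInterval, ℂ) | (f 0).im = 0 ∧ f 1 = 0}
  add_mem' := by
    rintro a b ⟨ha0, ha1⟩ ⟨hb0, hb1⟩
    constructor <;> simp [ha0, ha1, hb0, hb1]
  mul_mem' := by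
    rintro a b ⟨ha0, ha1⟩ ⟨hb0, hb1⟩
    constructor <;> simp [Complex.mul_im, ha0, ha1, hb0, hb1]
  zero_mem' := by constructor <;> simp
  smul_mem' := by
    rintro r a ⟨ha0, ha1⟩
    constructor <;> simp [Complex.smul_im, ha0, ha1]
  star_mem' := by
    rintro a ⟨ha0, ha1⟩
    constructor <;> simp [ha0, ha1]

/-- The real ⋆-algebra `C₀^ℝ(iℝ) = {f ∈ C₀(ℝ, ℂ) : f(−x) = conj (f x)}`, as a
non-unital real ⋆-subalgebra of `C₀(ℝ, ℂ)`. -/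
noncomputable def CoRiR : NonUnitalStarSubalgebra ℝ C₀(ℝ, ℂ) where
  carrier := {f : C₀(ℝ, ℂ) | ∀ x : ℝ, f (-x) = conj (f x)}
  add_mem' := by
    intro a b ha hb
    simp only [Set.mem_setOf_eq] at *
    intro x
    simp [ha x, hb x]
  mul_mem' := by
    intro a b ha hb
    simp only [Set.mem_setOf_eq] at *
    intro x
    simp [ha x, hb x]
  zero_mem' := by
    simp only [Set.mem_setOf_eq]
    intro x
    simp
  smul_mem' := by
    intro r a ha
    simp only [Set.mem_setOf_eq] at *
    intro x
    simp [ha x, Complex.real_smul]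
  star_mem' := by
    intro a ha
    simp only [Set.mem_setOf_eq] at *
    intro x
    simp only [ZeroAtInftyContinuousMap.star_apply, ha x, starRingEnd_apply, star_star]

/-- The map `ℝ → [0,1]`, `x ↦ |x| / (1 + |x|)`. -/
noncomputable def coneParam (x : ℝ) : unitInterval :=
  ⟨|x| / (1 + |x|), by positivity, by
    rw [div_le_one (by positivity)]; linarith⟩

theorem continuous_coneParam : Continuous coneParam := by
  unfold coneParam
  refine Continuous.subtype_mk ?_ _
  refine continuous_abs.div (continuous_const.add continuous_abs) ?_
  intro x
  positivity

theorem coneParam_neg (x : ℝ) : coneParam (-x) = coneParam x := by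
  simp [coneParam]

theorem coneParam_zero : coneParam 0 = 0 := by
  apply Subtype.ext
  simp [coneParam]

theorem coneParam_ne_one (x : ℝ) : coneParam x ≠ 1 := by
  intro h
  have h1 := congrArg Subtype.val h
  have h2 : (0 : ℝ) < 1 + |x| := by positivity
  change |x| / (1 + |x|) = 1 at h1
  rw [div_eq_one_iff_eq h2.ne'] at h1
  linarith

theorem coneParam_inv (x : ℝ) :
    (coneParam x : ℝ) / (1 - (coneParam x : ℝ)) = |x| := by
  have h2 : (1 + |x|) ≠ 0 := by positivity
  have h3 : 1 - |x| / (1 + |x|) = 1 / (1 + |x|) := by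
    field_simp
    ring
  simp only [coneParam]
  rw [h3]
  field_simp

theorem coneParam_right_inv (t : unitInterval) (ht : t ≠ 1) :
    coneParam ((t : ℝ) / (1 - t)) = t := by
  have h0 := t.2.1
  have h1 : (t : ℝ) < 1 := lt_of_le_of_ne t.2.2 (fun h => ht (Subtype.ext h))
  have h2 : (1 : ℝ) - t ≠ 0 := by linarith
  have h4 : (0 : ℝ) ≤ t / (1 - t) := div_nonneg h0 (by linarith)
  apply Subtype.ext
  simp only [coneParam]
  rw [abs_of_nonneg h4]
  have h3 : 1 + (t : ℝ) / (1 - t) = 1 / (1 - t) := by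
    field_simp
    ring
  rw [h3]
  field_simp

theorem tendsto_coneParam : Filter.Tendsto coneParam (Filter.cocompact ℝ) (nhds 1) := by
  rw [tendsto_subtype_rng]
  have h1 : Filter.Tendsto (fun x : ℝ => 1 - (1 + |x|)⁻¹) (Filter.cocompact ℝ) (nhds (1 - 0)) := by
    refine tendsto_const_nhds.sub (tendsto_inv_atTop_zero.comp ?_)
    exact Filter.tendsto_atTop_add_const_left _ _ (tendsto_norm_cocompact_atTop (E := ℝ))
  rw [sub_zero] at h1
  refine h1.congr ?_
  intro x
  have h2 : (1 + |x|) ≠ 0 := by positivity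
  simp only [coneParam]
  field_simp
  ring

theorem tendsto_coneInv :
    Filter.Tendsto (fun t : unitInterval => (t : ℝ) / (1 - t)) (nhdsWithin 1 {1}ᶜ)
      Filter.atTop := by
  have hc : Filter.Tendsto (fun t : unitInterval => (t : ℝ)) (nhdsWithin 1 {1}ᶜ) (nhds 1) := by
    have := (continuous_subtype_val (p := fun x : ℝ => x ∈ unitInterval)).tendsto 1
    exact this.mono_left nhdsWithin_le_nhds
  have hd : Filter.Tendsto (fun t : unitInterval => 1 - (t : ℝ)) (nhdsWithin 1 {1}ᶜ)
      (nhdsWithin 0 (Set.Ioi 0)) := by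
    refine tendsto_nhdsWithin_iff.2 ⟨?_, ?_⟩
    · simpa using hc.const_sub 1
    · filter_upwards [self_mem_nhdsWithin] with t ht
      have h1 : (t : ℝ) < 1 := lt_of_le_of_ne t.2.2 (fun h => ht (Subtype.ext h))
      simpa using h1
  simp only [div_eq_mul_inv]
  exact Filter.Tendsto.pos_mul_atTop one_pos hc (tendsto_inv_nhdsGT_zero.comp hd)

/-- The underlying function of the image of `f` in `C₀^ℝ(iℝ)`. -/
noncomputable def coneFwdFun (f : C(unitInterval, ℂ)) (x : ℝ) : ℂ :=
  if 0 ≤ x then f (coneParam x) else conj (f (coneParam x))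

theorem continuous_coneFwdFun (f : C(unitInterval, ℂ)) (hf : (f 0).im = 0) :
    Continuous (coneFwdFun f) := by
  have h := f.continuous.comp continuous_coneParam
  refine Continuous.if_le h (Complex.continuous_conj.comp h) continuous_const continuous_id ?_
  intro x hx
  have hx' : x = 0 := hx.symm
  subst hx'
  simp only [Function.comp, coneParam_zero]
  exact (Complex.conj_eq_iff_im.2 hf).symm

theorem tendsto_coneFwdFun (f : C(unitInterval, ℂ)) (hf : f 1 = 0) :
    Filter.Tendsto (coneFwdFun f) (Filter.cocompact ℝ) (nhds 0) := by
  have h : Filter.Tendsto (fun x => ‖f (coneParam x)‖) (Filter.cocompact ℝ) (nhds 0) := by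
    have := ((f.continuous.tendsto 1).comp tendsto_coneParam).norm
    simpa [hf] using this
  rw [tendsto_zero_iff_norm_tendsto_zero]
  refine h.congr ?_
  intro x
  unfold coneFwdFun
  split_ifs <;> simp

theorem coneFwdFun_neg (f : C(unitInterval, ℂ)) (hf : (f 0).im = 0) (x : ℝ) :
    coneFwdFun f (-x) = conj (coneFwdFun f x) := by
  unfold coneFwdFun
  rw [coneParam_neg]
  rcases lt_trichotomy x 0 with h | h | h
  · rw [if_pos (by linarith), if_neg (by linarith)]; simp
  · subst h
    simp [coneParam_zero, Complex.conj_eq_iff_im.2 hf]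
  · rw [if_neg (by linarith), if_pos (by linarith)]

/-- The forward map. -/
noncomputable def coneFwd (f : mappingConeRealComplex) : CoRiR :=
  ⟨⟨⟨coneFwdFun f.1, continuous_coneFwdFun f.1 f.2.1⟩, tendsto_coneFwdFun f.1 f.2.2⟩,
    coneFwdFun_neg f.1 f.2.1⟩

theorem coneFwd_apply (f : mappingConeRealComplex) (x : ℝ) :
    (coneFwd f).1 x = if 0 ≤ x then f.1 (coneParam x) else conj (f.1 (coneParam x)) := rfl

open Classical in
/-- The underlying function of the inverse map. -/
noncomputable def coneBwdFun (g : C₀(ℝ, ℂ)) : unitInterval → ℂ :=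
  Function.update (fun t : unitInterval => g ((t : ℝ) / (1 - t))) 1 0

theorem coneBwdFun_one (g : C₀(ℝ, ℂ)) : coneBwdFun g 1 = 0 := by
  simp [coneBwdFun]

theorem coneBwdFun_of_ne (g : C₀(ℝ, ℂ)) (t : unitInterval) (ht : t ≠ 1) :
    coneBwdFun g t = g ((t : ℝ) / (1 - t)) := by
  simp [coneBwdFun, ht]

theorem continuous_coneBwdFun (g : C₀(ℝ, ℂ)) : Continuous (coneBwdFun g) := by
  rw [continuous_iff_continuousAt]
  intro t
  by_cases ht : t = 1
  · subst ht
    unfold coneBwdFun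
    rw [continuousAt_update_same]
    have h := (zero_at_infty g).comp (tendsto_coneInv.mono_right atTop_le_cocompact)
    exact h
  · unfold coneBwdFun
    rw [continuousAt_update_of_ne ht]
    have h2 : (1 : ℝ) - t ≠ 0 := fun h => ht (Subtype.ext (sub_eq_zero.1 h).symm)
    have h3 : ContinuousAt (fun t : unitInterval => (t : ℝ) / (1 - t)) t :=
      continuous_subtype_val.continuousAt.div
        (continuous_const.sub continuous_subtype_val).continuousAt h2
    exact ContinuousAt.comp (g := g) (map_continuous g).continuousAt h3

/-- The inverse map. -/
noncomputable def coneBwd (g : CoRiR) : mappingConeRealComplex :=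
  ⟨⟨coneBwdFun g.1, continuous_coneBwdFun g.1⟩, by
    refine ⟨?_, coneBwdFun_one g.1⟩
    change (coneBwdFun g.1 0).im = 0
    rw [coneBwdFun_of_ne _ _ zero_ne_one]
    have h := g.2 0
    rw [neg_zero] at h
    simpa using Complex.conj_eq_iff_im.1 h.symm⟩

theorem coneBwd_apply (g : CoRiR) (t : unitInterval) : (coneBwd g).1 t = coneBwdFun g.1 t := rfl

theorem cone_left_inv (f : mappingConeRealComplex) : coneBwd (coneFwd f) = f := by
  apply Subtype.ext
  apply ContinuousMap.ext
  intro t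
  rw [coneBwd_apply]
  by_cases ht : t = 1
  · subst ht
    rw [coneBwdFun_one]
    exact f.2.2.symm
  · rw [coneBwdFun_of_ne _ _ ht, coneFwd_apply, coneParam_right_inv t ht, if_pos]
    exact div_nonneg t.2.1 (sub_nonneg.2 t.2.2)

theorem cone_right_inv (g : CoRiR) : coneFwd (coneBwd g) = g := by
  apply Subtype.ext
  apply ZeroAtInftyContinuousMap.ext
  intro x
  rw [coneFwd_apply, coneBwd_apply, coneBwdFun_of_ne _ _ (coneParam_ne_one x), coneParam_inv]
  split_ifs with h
  · rw [abs_of_nonneg h]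
  · rw [abs_of_neg (not_le.1 h), g.2 x]
    simp

/-- the mapping cone of the inclusion `ℝ ↪ ℂ` is isomorphic as a real
⋆-algebra to `C₀^ℝ(iℝ) = {f ∈ C₀(ℝ, ℂ) : f(−x) = conj (f x)}`. -/
theorem mappingCone_iso_CoRiR :
    Nonempty (mappingConeRealComplex ≃⋆ₐ[ℝ] CoRiR) := by
  refine ⟨{ toFun := coneFwd, invFun := coneBwd, left_inv := cone_left_inv,
            right_inv := cone_right_inv, map_mul' := ?_, map_add' := ?_, map_star' := ?_,
            map_smul' := ?_ }⟩
  · intro a b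
    apply Subtype.ext
    apply ZeroAtInftyContinuousMap.ext
    intro x
    change _ = (coneFwd a).1 x * (coneFwd b).1 x
    simp only [coneFwd_apply]
    split_ifs <;> simp
  · intro a b
    apply Subtype.ext
    apply ZeroAtInftyContinuousMap.ext
    intro x
    change _ = (coneFwd a).1 x + (coneFwd b).1 x
    simp only [coneFwd_apply]
    split_ifs <;> simp
  · intro a
    apply Subtype.ext
    apply ZeroAtInftyContinuousMap.ext
    intro x
    change _ = star ((coneFwd a).1 x)
    simp only [coneFwd_apply]
    split_ifs <;> simp
  · intro r a
    apply Subtype.ext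
    apply ZeroAtInftyContinuousMap.ext
    intro x
    change _ = r • ((coneFwd a).1 x)
    simp only [coneFwd_apply]
    split_ifs <;> simp
end
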